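/- arXiv:1906.03021 — 6 statements merged into one kernel-verified Lean document; each statement's English description precedes it below -/
import Mathlib

section
/- For i = 1,…,N let χ_i : ℝ → ℝ be continuous one-dimensional kernels, i.e. χ_i ∈ L¹(ℝ), ∑_{k∈ℤ} χ_i(u−k) = 1 for all u ∈ ℝ, and A_{χ_i} := sup_{u∈ℝ} ∑_{k∈ℤ} |χ_i(u−k)| < +∞ with the series converging uniformly on compact sets. Let m ∈ ℕ, m ≥ 1, let χ̄_{i,m}(t) := (1/m)∫_{-m/2}^{m/2} χ_i(t+v) dv, and let f : ℝ^N → ℝ satisfy |f| ≤ M. Then for every w > 0, m ∈ ℕ, j = 1,…,N and every t ∈ ℝ^N, the sampling series (S̄^m_w f)(t) := ∑_{k∈ℤ^N} f(k/w) ∏_{i=1}^N χ̄_{i,m}(w t_i − k_i) has a partial derivative with respect to t_j at t, given by ∂(S̄^m_w f)/∂t_j (t) = (w/m) ∑_{k∈ℤ^N} f(k/w) ∏_{i≠j} χ̄_{i,m}(w t_i − k_i) [χ_j(w t_j − k_j + m/2) − χ_j(w t_j − k_j − m/2)], and moreover |∂(S̄^m_w f)/∂t_j (t)| ≤ (2w/m)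 M ∏_{i=1}^N A_{χ_i}. -/
open MeasureTheory

/-- The averaged kernel `χ̄_m(t) := (1/m) ∫_{-m/2}^{m/2} χ(t+v) dv`. -/
noncomputable def avgKernel (χ : ℝ → ℝ) (m : ℕ) (t : ℝ) : ℝ :=
  (1 / (m : ℝ)) * ∫ v in (-(m : ℝ) / 2)..((m : ℝ) / 2), χ (t + v)

lemma aux_cont (χ : ℝ → ℝ) (hc : Continuous χ)
    (hs : ∀ u : ℝ, Summable fun k : ℤ => |χ (u - (k : ℝ))|)
    (hunif : ∀ K : Set ℝ, IsCompact K →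
      TendstoUniformlyOn (fun (s : Finset ℤ) (u : ℝ) => ∑ k ∈ s, |χ (u - (k : ℝ))|)
        (fun u => ∑' k : ℤ, |χ (u - (k : ℝ))|) Filter.atTop K)
    (c : ℤ → ℝ) (C : ℝ) (hC : ∀ k, |c k| ≤ C) :
    Continuous (fun u : ℝ => ∑' k : ℤ, c k * χ (u - (k : ℝ))) := by
  have hC0 : 0 ≤ C := (abs_nonneg _).trans (hC 0)
  have key : TendstoLocallyUniformly
      (fun (s : Finset ℤ) (u : ℝ) => ∑ k ∈ s, c k * χ (u - (k : ℝ)))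
      (fun u : ℝ => ∑' k : ℤ, c k * χ (u - (k : ℝ))) Filter.atTop := by
    rw [tendstoLocallyUniformly_iff_forall_isCompact]
    intro K hK
    rw [Metric.tendstoUniformlyOn_iff]
    intro ε hε
    have h1 := Metric.tendstoUniformlyOn_iff.1 (hunif K hK) (ε / (C + 1)) (by positivity)
    filter_upwards [h1] with s hsd u hu
    have h2 := hsd u hu
    have hsa : Summable fun k : ℤ => |c k * χ (u - (k : ℝ))| := by
      refine Summable.of_nonneg_of_le (fun _ => abs_nonneg _) (fun k => ?_) ((hs u).mul_left C)
      rw [abs_mul]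
      exact mul_le_mul_of_nonneg_right (hC k) (abs_nonneg _)
    have e1 := hsa.of_abs.sum_add_tsum_subtype_compl s
    have e2 := (hs u).sum_add_tsum_subtype_compl s
    rw [Real.dist_eq] at h2 ⊢
    rw [← e1]
    rw [← e2] at h2
    rw [add_sub_cancel_left] at h2 ⊢
    have h3 : |∑' x : {x // x ∉ s}, c x * χ (u - ((x : ℤ) : ℝ))| ≤
        C * ∑' x : {x // x ∉ s}, |χ (u - ((x : ℤ) : ℝ))| := by
      rw [← tsum_mul_left]
      rw [← Real.norm_eq_abs]
      refine tsum_of_norm_bounded (Summable.hasSum ?_) (fun x => ?_)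
      · exact ((hs u).subtype _).mul_left C
      · rw [Real.norm_eq_abs, abs_mul]
        exact mul_le_mul_of_nonneg_right (hC x) (abs_nonneg _)
    have h4 := (le_abs_self _).trans_lt h2
    rw [lt_div_iff₀ (by positivity)] at h4
    have h5 : 0 ≤ ∑' x : {x // x ∉ s}, |χ (u - ((x : ℤ) : ℝ))| :=
      tsum_nonneg (fun _ => abs_nonneg _)
    refine h3.trans_lt ?_
    nlinarith
  refine key.continuous (Filter.Frequently.of_forall fun s => ?_)
  fun_prop

lemma aux_hasSum (χ : ℝ → ℝ) (hc : Continuous χ)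
    (hs : ∀ u : ℝ, Summable fun k : ℤ => |χ (u - (k : ℝ))|)
    (hunif : ∀ K : Set ℝ, IsCompact K →
      TendstoUniformlyOn (fun (s : Finset ℤ) (u : ℝ) => ∑ k ∈ s, |χ (u - (k : ℝ))|)
        (fun u => ∑' k : ℤ, |χ (u - (k : ℝ))|) Filter.atTop K)
    (c : ℤ → ℝ) (C : ℝ) (hC : ∀ k, |c k| ≤ C) (m : ℕ) (u : ℝ) :
    HasSum (fun k : ℤ => c k * avgKernel χ m (u - (k : ℝ)))
      ((1 / (m : ℝ)) * ∫ v in (-(m : ℝ) / 2)..((m : ℝ) / 2),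
        ∑' k : ℤ, c k * χ (u + v - (k : ℝ))) := by
  have hcS : Continuous (fun u : ℝ => ∑' k : ℤ, C * |χ (u - (k : ℝ))|) :=
    aux_cont (fun x => |χ x|) hc.abs (by simpa using hs) (by simpa using hunif)
      (fun _ => C) |C| (fun _ => le_rfl)
  have hle : ∀ k : ℤ, ∀ v, |c k * χ (u + v - (k : ℝ))| ≤ C * |χ (u + v - (k : ℝ))| := by
    intro k v
    rw [abs_mul]
    exact mul_le_mul_of_nonneg_right (hC k) (abs_nonneg _)
  have := (intervalIntegral.hasSum_integral_of_dominated_convergence (μ := volume)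
    (a := -(m : ℝ) / 2) (b := (m : ℝ) / 2)
    (F := fun (k : ℤ) v => c k * χ (u + v - (k : ℝ)))
    (f := fun v => ∑' k : ℤ, c k * χ (u + v - (k : ℝ)))
    (fun k v => C * |χ (u + v - (k : ℝ))|)
    (fun k => (by fun_prop : Continuous _).aestronglyMeasurable)
    (fun k => Filter.Eventually.of_forall fun v _ => hle k v)
    (Filter.Eventually.of_forall fun v _ => (hs (u + v)).mul_left C)
    ((hcS.comp (continuous_const.add continuous_id : Continuous fun v : ℝ => u + v)).intervalIntegrable _ _)
    (Filter.Eventually.of_forall fun v _ => by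
      refine Summable.hasSum (Summable.of_abs ?_)
      exact Summable.of_nonneg_of_le (fun _ => abs_nonneg _) (fun k => hle k v)
        ((hs (u + v)).mul_left C))).mul_left (1 / (m : ℝ))
  refine this.congr_fun ?_ |> fun h => h
  intro k
  simp only [avgKernel, intervalIntegral.integral_const_mul]
  have : ∀ v : ℝ, u - (k : ℝ) + v = u + v - k := fun v => by ring
  simp only [this]
  ring

lemma aux_avg_abs (χ : ℝ → ℝ) (hc : Continuous χ)
    (hs : ∀ u : ℝ, Summable fun k : ℤ => |χ (u - (k : ℝ))|)
    (hunif : ∀ K : Set ℝ, IsCompact K →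
      TendstoUniformlyOn (fun (s : Finset ℤ) (u : ℝ) => ∑ k ∈ s, |χ (u - (k : ℝ))|)
        (fun u => ∑' k : ℤ, |χ (u - (k : ℝ))|) Filter.atTop K)
    (hb : BddAbove (Set.range fun u : ℝ => ∑' k : ℤ, |χ (u - (k : ℝ))|))
    (m : ℕ) (hm : 1 ≤ m) (u : ℝ) :
    (Summable fun k : ℤ => |avgKernel χ m (u - (k : ℝ))|) ∧
      ∑' k : ℤ, |avgKernel χ m (u - (k : ℝ))| ≤ ⨆ u : ℝ, ∑' k : ℤ, |χ (u - (k : ℝ))| := by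
  have hm0 : (0 : ℝ) < m := by exact_mod_cast hm
  have h := aux_hasSum (fun x => |χ x|) hc.abs (by simpa using hs) (by simpa using hunif)
      (fun _ => 1) 1 (by simp) m u
  have hcS : Continuous (fun u : ℝ => ∑' k : ℤ, |χ (u - (k : ℝ))|) := by
    simpa using aux_cont (fun x => |χ x|) hc.abs (by simpa using hs) (by simpa using hunif)
      (fun _ => 1) 1 (by simp)
  simp only [one_mul] at h
  have hle : ∀ k : ℤ, |avgKernel χ m (u - (k : ℝ))| ≤ avgKernel (fun x => |χ x|) m (u - (k : ℝ)) := by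
    intro k
    unfold avgKernel
    rw [abs_mul, abs_of_pos (by positivity : (0 : ℝ) < 1 / m)]
    exact mul_le_mul_of_nonneg_left
      (intervalIntegral.abs_integral_le_integral_abs (by linarith)) (by positivity)
  have hS := Summable.of_nonneg_of_le (fun _ => abs_nonneg _) hle h.summable
  refine ⟨hS, (hS.tsum_le_tsum hle h.summable).trans ?_⟩
  rw [h.tsum_eq]
  have : ∫ v in (-(m : ℝ) / 2)..((m : ℝ) / 2), ∑' k : ℤ, |χ (u + v - (k : ℝ))| ≤
      ∫ v in (-(m : ℝ) / 2)..((m : ℝ) / 2), ⨆ u : ℝ, ∑' k : ℤ, |χ (u - (k : ℝ))| := by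
    refine intervalIntegral.integral_mono_on (by linarith) ?_ (by simp) ?_
    · exact (hcS.comp (continuous_const.add continuous_id :
        Continuous fun v : ℝ => u + v)).intervalIntegrable _ _
    · intro v _
      exact le_ciSup hb (u + v)
  rw [intervalIntegral.integral_const, smul_eq_mul] at this
  rw [one_div, inv_mul_le_iff₀ hm0]
  refine this.trans (le_of_eq ?_)
  ring

lemma aux_prod : ∀ (n : ℕ) (g : Fin n → ℤ → ℝ) (_ : ∀ i k, 0 ≤ g i k) (_ : ∀ i, Summable (g i)),
    HasSum (fun k : Fin n → ℤ => ∏ i, g i (k i)) (∏ i, ∑' k, g i k) := by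
  intro n
  induction n with
  | zero => 
    intro g _ _
    simp
  | succ n ih =>
    intro g hg hs
    rw [← (Fin.insertNthEquiv (fun _ => ℤ) (0 : Fin (n+1))).hasSum_iff, Fin.prod_univ_succ]
    have h1 := ih (fun i => g i.succ) (fun i => hg _) (fun i => hs _)
    have h3 : Summable fun x : ℤ × (Fin n → ℤ) => g 0 x.1 * ∏ i, g (Fin.succ i) (x.2 i) :=
      Summable.mul_of_nonneg (f := g 0) (g := fun p : Fin n → ℤ => ∏ i, g (Fin.succ i) (p i))
        (hs 0) h1.summable (fun k => hg 0 k)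
        (fun k => Finset.prod_nonneg fun i _ => hg (Fin.succ i) (k i))
    have h2 := HasSum.mul (hs 0).hasSum h1 h3
    refine h2.congr_fun ?_ |> fun h => h
    intro k
    simp [Fin.prod_univ_succ]

lemma aux_split (n : ℕ) (j : Fin (n+1)) (φ : (Fin (n+1) → ℤ) → ℝ) (M : ℝ) (hφ : ∀ k, |φ k| ≤ M)
    (P : (Fin n → ℤ) → ℝ) (hP : Summable fun p => |P p|) (d : ℤ → ℝ) (hd : Summable fun l => |d l|) :
    ∑' k : Fin (n+1) → ℤ, φ k * P (fun i => k (j.succAbove i)) * d (k j) =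
      ∑' l : ℤ, (∑' p : Fin n → ℤ, φ (j.insertNth l p) * P p) * d l := by
  rw [← (Fin.insertNthEquiv (fun _ => ℤ) j).tsum_eq, Summable.tsum_prod]
  · refine tsum_congr fun l => ?_
    rw [← tsum_mul_right]
    refine tsum_congr fun p => ?_
    simp [Fin.insertNthEquiv]
  · refine Summable.of_abs ?_
    refine Summable.of_nonneg_of_le (fun _ => abs_nonneg _) (fun x => ?_)
      ((hd.mul_of_nonneg hP (fun _ => abs_nonneg _) (fun _ => abs_nonneg _)).mul_left M)
    obtain ⟨l, p⟩ := x
    simp only [Fin.insertNthEquiv_apply, Fin.insertNth_apply_same, Fin.insertNth_apply_succAbove,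
      abs_mul]
    rw [mul_assoc, mul_comm |d l|]
    exact mul_le_mul_of_nonneg_right (hφ _) (by positivity)

lemma aux_erase (n : ℕ) (j : Fin (n+1)) (g : Fin (n+1) → ℝ) :
    ∏ i ∈ Finset.univ.erase j, g i = ∏ i, g (j.succAbove i) := by
  rw [← Finset.compl_singleton, ← Fin.image_succAbove_univ,
    Finset.prod_image (fun a _ b _ h => Fin.succAbove_right_injective h)]

/-- for continuous one-dimensional kernels `χ_1,…,χ_N`, `m ≥ 1` and `f` bounded
by `M`, the multivariate generalized sampling series based on the product averaged kernel
`(S̄^m_w f)(t) = ∑_{k∈ℤ^N} f(k/w) ∏_i χ̄_{i,m}(w t_i − k_i)` has, at every point `t` and for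
every direction `j`, the partial derivative
`(w/m) ∑_{k∈ℤ^N} f(k/w) ∏_{i≠j} χ̄_{i,m}(w t_i − k_i)
  [χ_j(w t_j − k_j + m/2) − χ_j(w t_j − k_j − m/2)]`,
whose absolute value is at most `(2w/m) M ∏_i A_{χ_i}`. -/
theorem sampling_series_averaged_partial_deriv
    (N : ℕ) (χ : Fin N → ℝ → ℝ)
    (hc : ∀ i, Continuous (χ i)) (hint : ∀ i, Integrable (χ i))
    (hpart : ∀ i, ∀ u : ℝ, HasSum (fun k : ℤ => χ i (u - (k : ℝ))) 1)
    (hsummable : ∀ i, ∀ u : ℝ, Summable fun k : ℤ => |χ i (u - (k : ℝ))|)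
    (hunif : ∀ i, ∀ K : Set ℝ, IsCompact K →
      TendstoUniformlyOn (fun (s : Finset ℤ) (u : ℝ) => ∑ k ∈ s, |χ i (u - (k : ℝ))|)
        (fun u => ∑' k : ℤ, |χ i (u - (k : ℝ))|) Filter.atTop K)
    (hbdd : ∀ i, BddAbove (Set.range fun u : ℝ => ∑' k : ℤ, |χ i (u - (k : ℝ))|))
    (m : ℕ) (hm : 1 ≤ m)
    (f : (Fin N → ℝ) → ℝ) (M : ℝ) (hf : ∀ t, |f t| ≤ M)
    (w : ℝ) (hw : 0 < w) (j : Fin N) (t : Fin N → ℝ) :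
    HasDerivAt
      (fun s : ℝ => ∑' k : Fin N → ℤ, f (fun i => (k i : ℝ) / w) *
        ∏ i, avgKernel (χ i) m (w * Function.update t j s i - (k i : ℝ)))
      ((w / (m : ℝ)) * ∑' k : Fin N → ℤ, f (fun i => (k i : ℝ) / w) *
        (∏ i ∈ Finset.univ.erase j, avgKernel (χ i) m (w * t i - (k i : ℝ))) *
        (χ j (w * t j - (k j : ℝ) + (m : ℝ) / 2) - χ j (w * t j - (k j : ℝ) - (m : ℝ) / 2)))
      (t j) ∧
    |(w / (m : ℝ)) * ∑' k : Fin N → ℤ, f (fun i => (k i : ℝ) / w) *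
        (∏ i ∈ Finset.univ.erase j, avgKernel (χ i) m (w * t i - (k i : ℝ))) *
        (χ j (w * t j - (k j : ℝ) + (m : ℝ) / 2) - χ j (w * t j - (k j : ℝ) - (m : ℝ) / 2))| ≤
      (2 * w / (m : ℝ)) * M * ∏ i, ⨆ u : ℝ, ∑' k : ℤ, |χ i (u - (k : ℝ))| := by
  obtain _ | n := N
  · exact j.elim0
  have hm0 : (0 : ℝ) < m := by exact_mod_cast hm
  have hM : 0 ≤ M := (abs_nonneg _).trans (hf 0)
  set A : Fin (n+1) → ℝ := fun i => ⨆ u : ℝ, ∑' k : ℤ, |χ i (u - (k : ℝ))| with hA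
  have hA0 : ∀ i, 0 ≤ A i := fun i =>
    Real.iSup_nonneg fun u => tsum_nonneg fun _ => abs_nonneg _
  have havg := fun i u => aux_avg_abs (χ i) (hc i) (hsummable i) (hunif i) (hbdd i) m hm u
  set φ : (Fin (n+1) → ℤ) → ℝ := fun k => f (fun i => (k i : ℝ) / w) with hφd
  have hφ : ∀ k, |φ k| ≤ M := fun k => hf _
  set P : (Fin n → ℤ) → ℝ := fun p =>
    ∏ i, avgKernel (χ (j.succAbove i)) m (w * t (j.succAbove i) - (p i : ℝ)) with hPd
  set B : ℝ := ∏ i, A (j.succAbove i) with hB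
  have hPsum := aux_prod n
    (fun i k => |avgKernel (χ (j.succAbove i)) m (w * t (j.succAbove i) - (k : ℝ))|)
    (fun _ _ => abs_nonneg _) (fun i => (havg (j.succAbove i) _).1)
  have hP : Summable fun p => |P p| := by
    simpa only [hPd, Finset.abs_prod] using hPsum.summable
  have hPB : ∑' p, |P p| ≤ B := by
    simp only [hPd, Finset.abs_prod]
    rw [hPsum.tsum_eq]
    exact Finset.prod_le_prod (fun i _ => tsum_nonneg fun _ => abs_nonneg _)
      (fun i _ => (havg (j.succAbove i) _).2)
  set c : ℤ → ℝ := fun l => ∑' p : Fin n → ℤ, φ (j.insertNth l p) * P p with hcd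
  have hcC : ∀ l, |c l| ≤ M * B := by
    intro l
    refine le_trans ?_ (mul_le_mul_of_nonneg_left hPB hM)
    rw [← tsum_mul_left, ← Real.norm_eq_abs]
    refine tsum_of_norm_bounded (hP.mul_left M).hasSum (fun x => ?_)
    rw [Real.norm_eq_abs, abs_mul]
    exact mul_le_mul_of_nonneg_right (hφ _) (abs_nonneg _)
  set G : ℝ → ℝ := fun u => ∑' l : ℤ, c l * χ j (u - (l : ℝ)) with hG
  have hGc : Continuous G := aux_cont (χ j) (hc j) (hsummable j) (hunif j) c _ hcC
  have hGs : ∀ u, Summable fun l : ℤ => c l * χ j (u - (l : ℝ)) := by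
    intro u
    refine Summable.of_abs (Summable.of_nonneg_of_le (fun _ => abs_nonneg _) (fun k => ?_)
      ((hsummable j u).mul_left (M * B)))
    rw [abs_mul]
    exact mul_le_mul_of_nonneg_right (hcC k) (abs_nonneg _)
  have hGb : ∀ u, |G u| ≤ M * B * A j := by
    intro u
    refine le_trans ?_ (mul_le_mul_of_nonneg_left (le_ciSup (hbdd j) u)
      ((abs_nonneg _).trans (hcC 0)))
    rw [← tsum_mul_left, ← Real.norm_eq_abs]
    refine tsum_of_norm_bounded ((hsummable j u).mul_left (M * B)).hasSum (fun x => ?_)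
    rw [Real.norm_eq_abs, abs_mul]
    exact mul_le_mul_of_nonneg_right (hcC _) (abs_nonneg _)
  -- the derivative series
  have hD : ∑' k : Fin (n+1) → ℤ, f (fun i => (k i : ℝ) / w) *
        (∏ i ∈ Finset.univ.erase j, avgKernel (χ i) m (w * t i - (k i : ℝ))) *
        (χ j (w * t j - (k j : ℝ) + (m : ℝ) / 2) - χ j (w * t j - (k j : ℝ) - (m : ℝ) / 2)) =
      G (w * t j + (m : ℝ) / 2) - G (w * t j - (m : ℝ) / 2) := by
    have hd : ∀ l : ℤ, χ j (w * t j - (l : ℝ) + (m : ℝ) / 2) - χ j (w * t j - (l : ℝ) - (m : ℝ) / 2)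
        = χ j (w * t j + (m : ℝ) / 2 - l) - χ j (w * t j - (m : ℝ) / 2 - l) := by
      intro l
      congr 2 <;> ring
    have h1 := aux_split n j φ M hφ P hP
      (fun l => χ j (w * t j + (m : ℝ) / 2 - l) - χ j (w * t j - (m : ℝ) / 2 - l))
      ((((hsummable j _).of_abs).sub ((hsummable j _).of_abs)).abs)
    simp only [hd, aux_erase]
    refine h1.trans ?_
    rw [hG]
    rw [← (hGs _).tsum_sub (hGs _)]
    refine tsum_congr fun l => ?_
    simp only [hcd]
    ring
  have hF : (fun s : ℝ => ∑' k : Fin (n+1) → ℤ, f (fun i => (k i : ℝ) / w) *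
        ∏ i, avgKernel (χ i) m (w * Function.update t j s i - (k i : ℝ))) =
      fun s => (1 / (m : ℝ)) * ((∫ x in (0:ℝ)..(w * s + (m : ℝ) / 2), G x) -
        ∫ x in (0:ℝ)..(w * s - (m : ℝ) / 2), G x) := by
    funext s
    have h1 := aux_split n j φ M hφ P hP
      (fun l => avgKernel (χ j) m (w * s - l)) (havg j _).1
    have h2 := aux_hasSum (χ j) (hc j) (hsummable j) (hunif j) c _ hcC m (w * s)
    have h3 : ∫ v in (-(m : ℝ) / 2)..((m : ℝ) / 2), ∑' k : ℤ, c k * χ j (w * s + v - (k : ℝ)) =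
        ∫ x in (w * s - (m : ℝ) / 2)..(w * s + (m : ℝ) / 2), G x := by
      have := intervalIntegral.integral_comp_add_left (a := -(m : ℝ) / 2) (b := (m : ℝ) / 2)
        G (w * s)
      rw [show w * s - (m : ℝ) / 2 = w * s + -(m : ℝ) / 2 by ring]
      exact this
    rw [intervalIntegral.integral_interval_sub_left (hGc.intervalIntegrable _ _)
      (hGc.intervalIntegrable _ _), ← h3, ← h2.tsum_eq, ← h1]
    refine tsum_congr fun k => ?_
    rw [Fin.prod_univ_succAbove _ j]
    simp only [Function.update_self, Function.update_of_ne (Fin.succAbove_ne j _), hφd, hPd]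
    ring
  rw [hD]
  constructor
  · rw [hF]
    have e1 : HasDerivAt (fun s : ℝ => w * s + (m : ℝ) / 2) w (t j) := by
      simpa using ((hasDerivAt_id (t j)).const_mul w).add_const ((m : ℝ) / 2)
    have e2 : HasDerivAt (fun s : ℝ => w * s - (m : ℝ) / 2) w (t j) := by
      simpa using ((hasDerivAt_id (t j)).const_mul w).sub_const ((m : ℝ) / 2)
    have d1 := (hGc.integral_hasStrictDerivAt 0 (w * t j + (m : ℝ) / 2)).hasDerivAt.comp (t j) e1
    have d2 := (hGc.integral_hasStrictDerivAt 0 (w * t j - (m : ℝ) / 2)).hasDerivAt.comp (t j) e2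
    have d3 := (d1.sub d2).const_mul (1 / (m : ℝ))
    refine HasDerivAt.congr_deriv (f := fun s : ℝ => (1 / (m : ℝ)) *
      ((∫ x in (0:ℝ)..(w * s + (m : ℝ) / 2), G x) -
        ∫ x in (0:ℝ)..(w * s - (m : ℝ) / 2), G x)) d3 ?_
    ring
  · rw [abs_mul, abs_of_pos (by positivity : 0 < w / (m : ℝ)), Fin.prod_univ_succAbove _ j]
    have h1 := abs_sub (G (w * t j + (m : ℝ) / 2)) (G (w * t j - (m : ℝ) / 2))
    have h2 := hGb (w * t j + (m : ℝ) / 2)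
    have h3 := hGb (w * t j - (m : ℝ) / 2)
    have h4 : |G (w * t j + (m : ℝ) / 2) - G (w * t j - (m : ℝ) / 2)| ≤ 2 * (M * B * A j) := by
      linarith
    refine (mul_le_mul_of_nonneg_left h4 (by positivity : 0 ≤ w / (m : ℝ))).trans (le_of_eq ?_)
    change _ = 2 * w / (m : ℝ) * M * (A j * B)
    ring
end

section
/- For i = 1,…,N let χ_i : ℝ → ℝ be continuous one-dimensional kernels (χ_i ∈ L¹(ℝ), ∑_{k∈ℤ} χ_i(u−k) = 1 for all u, A_{χ_i} := sup_u ∑_{k∈ℤ} |χ_i(u−k)| < +∞ with uniform convergence on compact sets), let m ∈ ℕ, m ≥ 1, χ̄_{i,m}(t) := (1/m)∫_{-m/2}^{m/2} χ_i(t+v) dv. Fix j ∈ {1,…,N}. Let f : ℝ^N → ℝ be bounded and suppose there is a measurable g : ℝ^N → ℝ such that for every x'_j ∈ ℝ^{N−1} the j-th section satisfies f(x'_j,b) − f(x'_j,a) = ∫_a^b g(x'_j,u) du for all a < b (so g is the j-th partial derivative of f along sections). Let K_{w,j} be the sampling-Kantorovich operator with kernel χ^{(j)}(t) := χ_j(t_j)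 ∏_{i≠j} χ̄_{i,m}(t_i), i.e. (K_{w,j} g)(t) := ∑_{k∈ℤ^N} [w ∫_{k_j/w}^{(k_j+1)/w} g(k₁/w,…,u,…,k_N/w) du] χ^{(j)}(wt − k). Then for every t ∈ ℝ^N, w > 0: ∂(S̄^m_w f)/∂t_j (t) = (1/m) ∑_{i=1}^m (K_{w,j} g)(t'_j, t_j − (m − 2(i−1))/(2w)), where (t'_j, s) denotes the point obtained from t by replacing its j-th coordinate with s. -/
open MeasureTheory

/-- The `j`-th sampling-Kantorovich type operator based on a kernel `K : ℝ^N → ℝ`: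
`(K_{w,j} g)(t) = ∑_{k∈ℤ^N} [w ∫_{k_j/w}^{(k_j+1)/w} g(k₁/w,…,u,…,k_N/w) du] K(wt − k)`. -/
noncomputable def kantOp {N : ℕ} (K : (Fin N → ℝ) → ℝ) (j : Fin N) (w : ℝ)
    (g : (Fin N → ℝ) → ℝ) (t : Fin N → ℝ) : ℝ :=
  ∑' k : Fin N → ℤ,
    (w * ∫ u in ((k j : ℝ) / w)..(((k j : ℝ) + 1) / w),
      g (Function.update (fun i => (k i : ℝ) / w) j u)) *
    K (fun i => w * t i - (k i : ℝ))

lemma aux_summable_pi {ι : Type*} [Fintype ι] [DecidableEq ι] (a : ι → ℤ → ℝ)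
    (ha : ∀ i, Summable fun k => |a i k|) :
    Summable fun q : ι → ℤ => |∏ i, a i (q i)| := by
  classical
  refine summable_of_sum_le (c := ∏ i, ∑' k, |a i k|) (fun _ => abs_nonneg _) ?_
  intro s
  have hsub : s ⊆ Fintype.piFinset (fun i => s.image (fun q => q i)) := by
    intro q hq
    rw [Fintype.mem_piFinset]
    intro i
    exact Finset.mem_image_of_mem (fun q : ι → ℤ => q i) hq
  calc ∑ q ∈ s, |∏ i, a i (q i)|
      ≤ ∑ q ∈ Fintype.piFinset (fun i => s.image (fun q => q i)), |∏ i, a i (q i)| :=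
        Finset.sum_le_sum_of_subset_of_nonneg hsub (fun _ _ _ => abs_nonneg _)
    _ = ∏ i, ∑ k ∈ s.image (fun q => q i), |a i k| := by
        rw [Finset.prod_univ_sum]
        simp only [Finset.abs_prod]
    _ ≤ ∏ i, ∑' k, |a i k| := by
        apply Finset.prod_le_prod
        · intro i _
          exact Finset.sum_nonneg (fun _ _ => abs_nonneg _)
        · intro i _
          exact (ha i).sum_le_tsum _ (fun _ _ => abs_nonneg _)

lemma aux_summable_avg (χ : ℝ → ℝ) (hc : Continuous χ)
    (hsum : ∀ u : ℝ, Summable fun k : ℤ => |χ (u - (k : ℝ))|)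
    (hbdd : BddAbove (Set.range fun u : ℝ => ∑' k : ℤ, |χ (u - (k : ℝ))|))
    (m : ℕ) (u : ℝ) : Summable fun k : ℤ => |avgKernel χ m (u - (k : ℝ))| := by
  obtain ⟨A, hA⟩ := hbdd
  have hA' : ∀ u, ∑' k : ℤ, |χ (u - (k : ℝ))| ≤ A := fun u => hA ⟨u, rfl⟩
  have hle : -(m : ℝ) / 2 ≤ (m : ℝ) / 2 := by
    have : (0 : ℝ) ≤ m := Nat.cast_nonneg m
    linarith
  have hii : ∀ k : ℤ, IntervalIntegrable (fun v => |χ (u - (k : ℝ) + v)|) volume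
      (-(m : ℝ) / 2) ((m : ℝ) / 2) := fun k =>
    Continuous.intervalIntegrable (by fun_prop) _ _
  refine summable_of_sum_le (c := (1 / (m : ℝ)) * ∫ v in (-(m : ℝ) / 2)..((m : ℝ) / 2), A)
    (fun _ => abs_nonneg _) ?_
  intro s
  calc ∑ k ∈ s, |avgKernel χ m (u - (k : ℝ))|
      ≤ ∑ k ∈ s, (1 / (m : ℝ)) * ∫ v in (-(m : ℝ) / 2)..((m : ℝ) / 2), |χ (u - (k : ℝ) + v)| := by
        apply Finset.sum_le_sum
        intro k _
        unfold avgKernel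
        rw [abs_mul, abs_of_nonneg (by positivity : (0 : ℝ) ≤ 1 / (m : ℝ))]
        exact mul_le_mul_of_nonneg_left (intervalIntegral.abs_integral_le_integral_abs hle)
          (by positivity)
    _ = (1 / (m : ℝ)) * ∫ v in (-(m : ℝ) / 2)..((m : ℝ) / 2), ∑ k ∈ s, |χ (u - (k : ℝ) + v)| := by
        rw [intervalIntegral.integral_finsetSum (fun k _ => hii k), Finset.mul_sum]
    _ ≤ _ := by
        apply mul_le_mul_of_nonneg_left _ (by positivity)
        apply intervalIntegral.integral_mono_on hle
        · exact Continuous.intervalIntegrable (by fun_prop) _ _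
        · exact intervalIntegrable_const
        · intro v _
          refine le_trans ?_ (hA' (u + v))
          have := (hsum (u + v)).sum_le_tsum s (fun _ _ => abs_nonneg _)
          refine le_trans (le_of_eq ?_) this
          refine Finset.sum_congr rfl fun k _ => ?_
          congr 2; ring

lemma aux_deriv_avg (χ : ℝ → ℝ) (hc : Continuous χ) (m : ℕ) (x : ℝ) :
    HasDerivAt (avgKernel χ m)
      ((1 / (m : ℝ)) * (χ (x + (m : ℝ) / 2) - χ (x - (m : ℝ) / 2))) x := by
  have hi : ∀ a b : ℝ, IntervalIntegrable χ volume a b := fun a b => hc.intervalIntegrable a b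
  have heq : avgKernel χ m = fun x => (1 / (m : ℝ)) *
      ((∫ v in (0 : ℝ)..(x + (m : ℝ) / 2), χ v) - ∫ v in (0 : ℝ)..(x - (m : ℝ) / 2), χ v) := by
    funext y
    unfold avgKernel
    rw [intervalIntegral.integral_comp_add_left (fun v => χ v),
      intervalIntegral.integral_interval_sub_left (hi _ _) (hi _ _)]
    congr 3; ring
  rw [heq]
  have hF : ∀ y : ℝ, HasDerivAt (fun z => ∫ v in (0 : ℝ)..z, χ v) (χ y) y := fun y =>
    intervalIntegral.integral_hasDerivAt_right (hi _ _)
      (hc.stronglyMeasurableAtFilter _ _) hc.continuousAt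
  have h1 := (hF (x + (m : ℝ) / 2)).comp x ((hasDerivAt_id x).add_const ((m : ℝ) / 2))
  have h2 := (hF (x - (m : ℝ) / 2)).comp x ((hasDerivAt_id x).sub_const ((m : ℝ) / 2))
  have h3 := (h1.sub h2).const_mul (1 / (m : ℝ))
  rw [mul_one, mul_one] at h3
  exact h3

lemma aux_summable_mul {ι : Type*} (a c : ι → ℝ) (C : ℝ) (ha : Summable fun n => |a n|)
    (hC : ∀ n, |c n| ≤ C) : Summable fun n => a n * c n := by
  refine Summable.of_norm_bounded (ha.mul_right C) ?_
  intro n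
  rw [Real.norm_eq_abs, abs_mul]
  exact mul_le_mul_of_nonneg_left (hC n) (abs_nonneg _)

lemma aux_unif (χ : ℝ → ℝ)
    (hsum : ∀ u : ℝ, Summable fun k : ℤ => |χ (u - (k : ℝ))|)
    (hunif : ∀ K : Set ℝ, IsCompact K →
      TendstoUniformlyOn (fun (s : Finset ℤ) (u : ℝ) => ∑ k ∈ s, |χ (u - (k : ℝ))|)
        (fun u => ∑' k : ℤ, |χ (u - (k : ℝ))|) Filter.atTop K)
    (c : ℤ → ℝ) (C : ℝ) (hC : ∀ n, |c n| ≤ C) (K : Set ℝ) (hK : IsCompact K) :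
    TendstoUniformlyOn (fun (s : Finset ℤ) (u : ℝ) => ∑ k ∈ s, χ (u - (k : ℝ)) * c k)
        (fun u => ∑' k : ℤ, χ (u - (k : ℝ)) * c k) Filter.atTop K := by
  have hC0 : 0 ≤ C := (abs_nonneg _).trans (hC 0)
  rw [Metric.tendstoUniformlyOn_iff]
  intro ε hε
  have h := (Metric.tendstoUniformlyOn_iff.1 (hunif K hK)) (ε / (C + 1)) (by positivity)
  filter_upwards [h] with s hs u hu
  have h1 := hs u hu
  have hsm := aux_summable_mul _ c C (hsum u) hC
  rw [Real.dist_eq] at h1 ⊢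
  rw [← (hsum u).sum_add_tsum_subtype_compl s, add_sub_cancel_left] at h1
  rw [← hsm.sum_add_tsum_subtype_compl s, add_sub_cancel_left]
  have hT : Summable fun k : {x // x ∉ s} => |χ (u - ((k : ℤ) : ℝ))| :=
    (hsum u).subtype (fun x => x ∉ s)
  have hle : |∑' k : {x // x ∉ s}, χ (u - ((k : ℤ) : ℝ)) * c k|
      ≤ (∑' k : {x // x ∉ s}, |χ (u - ((k : ℤ) : ℝ))|) * C := by
    rw [← tsum_mul_right]
    rw [← Real.norm_eq_abs]
    refine tsum_of_norm_bounded (hT.mul_right C).hasSum ?_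
    intro k
    rw [Real.norm_eq_abs, abs_mul]
    exact mul_le_mul_of_nonneg_left (hC k) (abs_nonneg _)
  have h2 := lt_of_le_of_lt (le_abs_self _) h1
  rw [lt_div_iff₀ (by positivity)] at h2
  have h0 : 0 ≤ ∑' k : {x // x ∉ s}, |χ (u - ((k : ℤ) : ℝ))| :=
    tsum_nonneg fun _ => abs_nonneg _
  nlinarith

lemma aux_deriv_series (χ : ℝ → ℝ) (hc : Continuous χ)
    (hsum : ∀ u : ℝ, Summable fun k : ℤ => |χ (u - (k : ℝ))|)
    (hunif : ∀ K : Set ℝ, IsCompact K →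
      TendstoUniformlyOn (fun (s : Finset ℤ) (u : ℝ) => ∑ k ∈ s, |χ (u - (k : ℝ))|)
        (fun u => ∑' k : ℤ, |χ (u - (k : ℝ))|) Filter.atTop K)
    (hbdd : BddAbove (Set.range fun u : ℝ => ∑' k : ℤ, |χ (u - (k : ℝ))|))
    (m : ℕ) (c : ℤ → ℝ) (C : ℝ) (hC : ∀ n, |c n| ≤ C) (w x : ℝ) :
    HasDerivAt (fun s : ℝ => ∑' n : ℤ, avgKernel χ m (w * s - n) * c n)
      ((w / m) * ((∑' n : ℤ, χ (w * x + (m : ℝ) / 2 - n) * c n) -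
        ∑' n : ℤ, χ (w * x - (m : ℝ) / 2 - n) * c n)) x := by
  have key : ∀ d : ℝ, TendstoUniformlyOn
      (fun (s : Finset ℤ) (y : ℝ) => ∑ n ∈ s, χ (w * y + d - n) * c n)
      (fun y => ∑' n : ℤ, χ (w * y + d - n) * c n) Filter.atTop (Metric.ball x 1) := by
    intro d
    have hK : IsCompact ((fun y => w * y + d) '' Metric.closedBall x 1) :=
      (isCompact_closedBall x 1).image (by fun_prop)
    have h := (aux_unif χ hsum hunif c C hC _ hK).comp (fun y => w * y + d)
    exact h.mono fun y hy => Set.mem_image_of_mem _ (Metric.ball_subset_closedBall hy)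
  have hsub := (key ((m : ℝ) / 2)).sub (key (-((m : ℝ) / 2)))
  have hmul := (uniformContinuous_const_smul (M := ℝ) (X := ℝ) (w / m : ℝ)).comp_tendstoUniformlyOn hsub
  have h := hasDerivAt_of_tendstoUniformlyOn (l := Filter.atTop)
    (f := fun (s : Finset ℤ) (y : ℝ) => ∑ n ∈ s, avgKernel χ m (w * y - n) * c n)
    (g := fun y : ℝ => ∑' n : ℤ, avgKernel χ m (w * y - n) * c n) (x := x)
    Metric.isOpen_ball hmul ?_ ?_ (Metric.mem_ball_self one_pos)
  · exact h
  · refine Filter.Eventually.of_forall fun s y _ => ?_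
    have h1 : ∀ n ∈ s, HasDerivAt (fun y : ℝ => avgKernel χ m (w * y - n) * c n)
        ((1 / (m : ℝ)) * (χ (w * y - n + (m : ℝ) / 2) - χ (w * y - n - (m : ℝ) / 2)) * w * c n)
        y := by
      intro n _
      have ha : HasDerivAt (fun y : ℝ => w * y - n) w y := by
        simpa using ((hasDerivAt_id y).const_mul w).sub_const (n : ℝ)
      exact ((aux_deriv_avg χ hc m (w * y - n)).comp y ha).mul_const (c n)
    have h2 := HasDerivAt.fun_sum h1
    convert h2 using 1
    simp only [Function.comp, Pi.sub_apply, smul_eq_mul]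
    rw [← Finset.sum_sub_distrib, Finset.mul_sum]
    refine Finset.sum_congr rfl fun n _ => ?_
    rw [show w * y - (n : ℝ) + (m : ℝ) / 2 = w * y + (m : ℝ) / 2 - n by ring,
      show w * y - (n : ℝ) - (m : ℝ) / 2 = w * y + -((m : ℝ) / 2) - n by ring]
    ring
  · intro y _
    exact (aux_summable_mul _ c C (aux_summable_avg χ hc hsum hbdd m (w * y)) hC).hasSum

lemma aux_split_s9 {N : ℕ} (j : Fin N) (B : (Fin N → ℤ) → ℝ) (C : ℝ) (hB : ∀ k, |B k| ≤ C)
    (A : ℤ → ℝ) (hA : Summable fun n => |A n|)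
    (Q : ({i : Fin N // i ≠ j} → ℤ) → ℝ) (hQ : Summable fun q => |Q q|) :
    ∑' k : Fin N → ℤ, B k * (A (k j) * Q (fun l => k l)) =
      ∑' n : ℤ, A n * ∑' q, Q q * B ((Equiv.piSplitAt j (fun _ => ℤ)).symm (n, q)) := by
  rw [← (Equiv.piSplitAt j (fun _ : Fin N => ℤ)).symm.tsum_eq]
  have hAQ : Summable fun p : ℤ × ({i : Fin N // i ≠ j} → ℤ) => |A p.1 * Q p.2| := by
    have := hA.mul_of_nonneg hQ (fun _ => abs_nonneg _) (fun _ => abs_nonneg _)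
    simpa only [abs_mul] using this
  have hS := aux_summable_mul _ (fun p => B ((Equiv.piSplitAt j (fun _ => ℤ)).symm p)) C hAQ
    (fun p => hB _)
  have hEq : ∀ p : ℤ × ({i : Fin N // i ≠ j} → ℤ),
      B ((Equiv.piSplitAt j (fun _ => ℤ)).symm p) *
        (A ((Equiv.piSplitAt j (fun _ => ℤ)).symm p j) *
          Q (fun l => (Equiv.piSplitAt j (fun _ => ℤ)).symm p l)) =
      A p.1 * Q p.2 * B ((Equiv.piSplitAt j (fun _ => ℤ)).symm p) := by
    intro p
    have h1 := (Equiv.piSplitAt j (fun _ : Fin N => ℤ)).apply_symm_apply p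
    have h2 : (Equiv.piSplitAt j (fun _ : Fin N => ℤ)).symm p j = p.1 := congrArg Prod.fst h1
    have h3 : (fun l : {i : Fin N // i ≠ j} =>
      (Equiv.piSplitAt j (fun _ : Fin N => ℤ)).symm p l) = p.2 := congrArg Prod.snd h1
    rw [h2, h3]; ring
  rw [tsum_congr hEq, hS.tsum_prod]
  refine tsum_congr fun n => ?_
  rw [← tsum_mul_left]
  exact tsum_congr fun q => by ring

/-- for continuous one-dimensional kernels `χ_1,…,χ_N`, `m ≥ 1`, `f` bounded whose
`j`-th sections are primitives of `g` (i.e. `f(x'_j,b) − f(x'_j,a) = ∫_a^b g(x'_j,u) du`), the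
`j`-th partial derivative of the multivariate generalized sampling series `S̄^m_w f` based on the
product averaged kernel equals
`(1/m) ∑_{i=1}^m (K_{w,j} g)(t'_j, t_j − (m − 2(i−1))/(2w))`,
where `K_{w,j}` is the sampling-Kantorovich operator with kernel
`χ^{(j)}(t) = χ_j(t_j) ∏_{i≠j} χ̄_{i,m}(t_i)`. -/
theorem sampling_series_deriv_eq_kantorovich
    (N : ℕ) (χ : Fin N → ℝ → ℝ)
    (hc : ∀ i, Continuous (χ i)) (hint : ∀ i, Integrable (χ i))
    (hpart : ∀ i, ∀ u : ℝ, HasSum (fun k : ℤ => χ i (u - (k : ℝ))) 1)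
    (hsummable : ∀ i, ∀ u : ℝ, Summable fun k : ℤ => |χ i (u - (k : ℝ))|)
    (hunif : ∀ i, ∀ K : Set ℝ, IsCompact K →
      TendstoUniformlyOn (fun (s : Finset ℤ) (u : ℝ) => ∑ k ∈ s, |χ i (u - (k : ℝ))|)
        (fun u => ∑' k : ℤ, |χ i (u - (k : ℝ))|) Filter.atTop K)
    (hbdd : ∀ i, BddAbove (Set.range fun u : ℝ => ∑' k : ℤ, |χ i (u - (k : ℝ))|))
    (m : ℕ) (hm : 1 ≤ m) (j : Fin N)
    (f : (Fin N → ℝ) → ℝ) (M : ℝ) (hf : ∀ t, |f t| ≤ M)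
    (g : (Fin N → ℝ) → ℝ) (hg : Measurable g)
    (hftc : ∀ (x : Fin N → ℝ) (a b : ℝ), a < b →
      f (Function.update x j b) - f (Function.update x j a) =
        ∫ u in a..b, g (Function.update x j u))
    (t : Fin N → ℝ) (w : ℝ) (hw : 0 < w) :
    HasDerivAt
      (fun s : ℝ => ∑' k : Fin N → ℤ, f (fun i => (k i : ℝ) / w) *
        ∏ i, avgKernel (χ i) m (w * Function.update t j s i - (k i : ℝ)))
      ((1 / (m : ℝ)) * ∑ i ∈ Finset.Icc 1 m,
        kantOp (fun s : Fin N → ℝ =>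
            χ j (s j) * ∏ l ∈ Finset.univ.erase j, avgKernel (χ l) m (s l)) j w g
          (Function.update t j (t j - ((m : ℝ) - 2 * ((i : ℝ) - 1)) / (2 * w))))
      (t j) := by
  classical
  have hM : 0 ≤ M := (abs_nonneg _).trans (hf 0)
  have hm0 : (m : ℝ) ≠ 0 := by
    have : (1 : ℝ) ≤ m := by exact_mod_cast hm
    linarith
  set e := Equiv.piSplitAt j (fun _ : Fin N => ℤ) with he
  set Q : ({i : Fin N // i ≠ j} → ℤ) → ℝ :=
    fun q => ∏ l : {i : Fin N // i ≠ j}, avgKernel (χ l) m (w * t l - (q l : ℝ)) with hQdef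
  have hQ : Summable fun q => |Q q| :=
    aux_summable_pi (fun (l : {i : Fin N // i ≠ j}) (n : ℤ) => avgKernel (χ l) m (w * t l - (n : ℝ)))
      (fun l => aux_summable_avg (χ l) (hc l) (hsummable l) (hbdd l) m (w * t l))
  set B : (Fin N → ℤ) → ℝ := fun k => f (fun i => (k i : ℝ) / w) with hBdef
  have hB : ∀ k, |B k| ≤ M := fun k => hf _
  set c : ℤ → ℝ := fun n => ∑' q, Q q * B (e.symm (n, q)) with hcdef
  have hcS : ∀ n, Summable fun q => Q q * B (e.symm (n, q)) := fun n =>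
    aux_summable_mul _ _ M hQ (fun q => hB _)
  have hC : ∀ n, |c n| ≤ (∑' q, |Q q|) * M := by
    intro n
    rw [← tsum_mul_right, ← Real.norm_eq_abs]
    refine tsum_of_norm_bounded (hQ.mul_right M).hasSum ?_
    intro q
    rw [Real.norm_eq_abs, abs_mul]
    exact mul_le_mul_of_nonneg_left (hB _) (abs_nonneg _)
  -- products over the other coordinates
  have hprod : ∀ (s : ℝ) (k : Fin N → ℤ), ∏ l ∈ Finset.univ.erase j,
      avgKernel (χ l) m (w * Function.update t j s l - (k l : ℝ)) = Q (fun l => k l) := by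
    intro s k
    rw [hQdef]
    rw [Finset.prod_subtype (p := fun i => i ≠ j) (Finset.univ.erase j) (by simp)]
    refine Finset.prod_congr rfl fun l _ => ?_
    rw [Function.update_of_ne l.2]
  have hF : (fun s : ℝ => ∑' k : Fin N → ℤ, f (fun i => (k i : ℝ) / w) *
        ∏ i, avgKernel (χ i) m (w * Function.update t j s i - (k i : ℝ))) =
      fun s : ℝ => ∑' n : ℤ, avgKernel (χ j) m (w * s - n) * c n := by
    funext s
    rw [← aux_split_s9 j B M hB (fun n => avgKernel (χ j) m (w * s - n))
      (aux_summable_avg (χ j) (hc j) (hsummable j) (hbdd j) m (w * s)) Q hQ]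
    refine tsum_congr fun k => ?_
    rw [← Finset.mul_prod_erase _ _ (Finset.mem_univ j), hprod, Function.update_self]
  have hSχ : ∀ u, Summable fun n : ℤ => χ j (u - n) * c n := fun u =>
    aux_summable_mul _ c _ (hsummable j u) hC
  have hK : ∀ s : ℝ, kantOp (fun s : Fin N → ℝ =>
            χ j (s j) * ∏ l ∈ Finset.univ.erase j, avgKernel (χ l) m (s l)) j w g
          (Function.update t j s) =
        w * ((∑' n : ℤ, χ j (w * s + 1 - n) * c n) - ∑' n : ℤ, χ j (w * s - n) * c n) := by
    intro s
    set B' : (Fin N → ℤ) → ℝ := fun k => w * (B (Function.update k j (k j + 1)) - B k) with hB'def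
    have hB' : ∀ k, |B' k| ≤ w * (M + M) := by
      intro k
      rw [hB'def]
      simp only
      rw [abs_mul, abs_of_pos hw]
      exact mul_le_mul_of_nonneg_left ((abs_sub _ _).trans (add_le_add (hB _) (hB _))) hw.le
    have h1 := aux_split_s9 j B' _ hB' (fun n => χ j (w * s - n)) (hsummable j (w * s)) Q hQ
    have hcB : ∀ n, ∑' q, Q q * B' (e.symm (n, q)) = w * (c (n + 1) - c n) := by
      intro n
      rw [hcdef]
      simp only
      rw [← (hcS (n + 1)).tsum_sub (hcS n), ← tsum_mul_left]
      refine tsum_congr fun q => ?_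
      have hu : Function.update (e.symm (n, q)) j (e.symm (n, q) j + 1) = e.symm (n + 1, q) := by
        funext i
        by_cases hi : i = j
        · subst hi
          simp [he, Equiv.piSplitAt]
        · simp [he, Equiv.piSplitAt, hi]
      rw [hB'def]
      simp only
      rw [hu]; ring
    have h2 : kantOp (fun s : Fin N → ℝ =>
            χ j (s j) * ∏ l ∈ Finset.univ.erase j, avgKernel (χ l) m (s l)) j w g
          (Function.update t j s) =
          ∑' k : Fin N → ℤ, B' k * (χ j (w * s - (k j : ℤ)) * Q (fun l => k l)) := by
      unfold kantOp
      refine tsum_congr fun k => ?_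
      simp only
      rw [hprod, Function.update_self,
        ← hftc _ _ _ (div_lt_div_of_pos_right (lt_add_one (k j : ℝ)) hw)]
      congr 2
      rw [hBdef]
      simp only
      congr 2
      · funext i
        by_cases hi : i = j
        · subst hi; simp
        · simp [hi]
      · funext i
        by_cases hi : i = j
        · subst hi; simp
        · simp [hi]
    rw [h2, h1]
    simp only [← he, hcB]
    have h3 : ∑' n : ℤ, χ j (w * s + 1 - n) * c n = ∑' n : ℤ, χ j (w * s - n) * c (n + 1) := by
      rw [← (Equiv.addRight (1 : ℤ)).tsum_eq]
      refine tsum_congr fun n => ?_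
      simp only [Equiv.coe_addRight, Int.cast_add, Int.cast_one]
      congr 2; ring
    have h4 : Summable fun n : ℤ => χ j (w * s - n) * c (n + 1) :=
      aux_summable_mul _ (fun n => c (n + 1)) _ (hsummable j (w * s)) (fun n => hC _)
    rw [h3, ← h4.tsum_sub (hSχ _), ← tsum_mul_left]
    exact tsum_congr fun n => by ring
  rw [hF]
  have hD := aux_deriv_series (χ j) (hc j) (hsummable j) (hunif j) (hbdd j) m c _ hC w (t j)
  convert hD using 1
  set G : ℝ → ℝ := fun u => ∑' n : ℤ, χ j (u - n) * c n with hG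
  have hsum : ∀ p : ℕ, ∑ i ∈ Finset.Icc 1 p, kantOp (fun s : Fin N → ℝ =>
            χ j (s j) * ∏ l ∈ Finset.univ.erase j, avgKernel (χ l) m (s l)) j w g
          (Function.update t j (t j - ((m : ℝ) - 2 * ((i : ℝ) - 1)) / (2 * w))) =
      w * (G (w * t j - (m : ℝ) / 2 + p) - G (w * t j - (m : ℝ) / 2)) := by
    intro p
    induction p with
    | zero => simp
    | succ p ih =>
      rw [Finset.sum_Icc_succ_top (by omega), ih, hK]
      have ha : w * (t j - ((m : ℝ) - 2 * (((p + 1 : ℕ) : ℝ) - 1)) / (2 * w)) =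
          w * t j - (m : ℝ) / 2 + p := by
        push_cast
        field_simp
        ring
      rw [ha]
      have hb : w * t j - (m : ℝ) / 2 + ((p + 1 : ℕ) : ℝ) = w * t j - (m : ℝ) / 2 + p + 1 := by
        push_cast; ring
      rw [hb]
      simp only [hG]
      ring
  rw [hsum m, show w * t j - (m : ℝ) / 2 + m = w * t j + (m : ℝ) / 2 by ring]
  simp only [hG]
  ring
end

section
/- Let χ : ℝ^N → ℝ be bounded and measurable with χ(t) = 0 for t ∉ [−T,T]^N (some T > 0) and ∑_{k∈ℤ^N} χ(u−k) = 1 for every u ∈ ℝ^N; set A_χ := sup_u ∑_{k∈ℤ^N} |χ(u−k)| (< +∞). Let f : ℝ^N → ℝ be bounded and measurable and fix j ∈ {1,…,N}. Then for every w > 0 and every t ∈ ℝ^N, |(K_{w,j} f)(t) − f(t)| ≤ A_χ · sup{ |f(u) − f(v)| : u, v ∈ ∏_{i=1}^N [t_i − (T+1)/w, t_i + (T+1)/w] }. -/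
open MeasureTheory

/-- for a bounded measurable kernel `χ : ℝ^N → ℝ` supported in `[−T,T]^N` with
`∑_{k∈ℤ^N} χ(u−k) = 1` for all `u`, and a bounded measurable `f`, one has, for every `w > 0`
and every `t ∈ ℝ^N`,
`|(K_{w,j} f)(t) − f(t)| ≤ A_χ · sup { |f(u) − f(v)| : u,v ∈ ∏ᵢ [tᵢ − (T+1)/w, tᵢ + (T+1)/w] }`. -/
theorem kantorovich_pointwise_oscillation_estimate
    (N : ℕ) (T : ℝ) (hT : 0 < T) (χ : (Fin N → ℝ) → ℝ)
    (hχm : Measurable χ) (C : ℝ) (hχb : ∀ s, |χ s| ≤ C)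
    (hsupp : ∀ s : Fin N → ℝ, (¬ ∀ i, s i ∈ Set.Icc (-T) T) → χ s = 0)
    (hpart : ∀ u : Fin N → ℝ, HasSum (fun k : Fin N → ℤ => χ (fun i => u i - (k i : ℝ))) 1)
    (f : (Fin N → ℝ) → ℝ) (hfm : Measurable f) (M : ℝ) (hfb : ∀ s, |f s| ≤ M)
    (j : Fin N) (w : ℝ) (hw : 0 < w) (t : Fin N → ℝ) :
    |kantOp χ j w f t - f t| ≤
      (⨆ u : Fin N → ℝ, ∑' k : Fin N → ℤ, |χ (fun i => u i - (k i : ℝ))|) *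
        sSup {d : ℝ | ∃ u v : Fin N → ℝ,
          (∀ i, u i ∈ Set.Icc (t i - (T + 1) / w) (t i + (T + 1) / w)) ∧
          (∀ i, v i ∈ Set.Icc (t i - (T + 1) / w) (t i + (T + 1) / w)) ∧
          d = |f u - f v|} := by
  classical
  have hC : 0 ≤ C := (abs_nonneg _).trans (hχb 0)
  set S : (Fin N → ℝ) → Finset (Fin N → ℤ) := fun u =>
    Fintype.piFinset fun i => Finset.Icc ⌈u i - T⌉ ⌊u i + T⌋ with hS
  have hz : ∀ u : Fin N → ℝ, ∀ k : Fin N → ℤ, k ∉ S u → χ (fun i => u i - (k i : ℝ)) = 0 := by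
    intro u k hk
    apply hsupp
    intro h
    apply hk
    rw [hS, Fintype.mem_piFinset]
    intro i
    have := h i
    rw [Set.mem_Icc] at this
    rw [Finset.mem_Icc, Int.ceil_le, Int.le_floor]
    constructor <;> linarith [this.1, this.2]
  have habs : ∀ u : Fin N → ℝ, ∑' k : Fin N → ℤ, |χ (fun i => u i - (k i : ℝ))|
      = ∑ k ∈ S u, |χ (fun i => u i - (k i : ℝ))| := by
    intro u
    apply tsum_eq_sum
    intro k hk
    rw [hz u k hk, abs_zero]
  have hcard : ∀ u : Fin N → ℝ, ((S u).card : ℝ) ≤ (2 * T + 1) ^ N := by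
    intro u
    rw [hS, Fintype.card_piFinset]
    push_cast
    calc _ ≤ ∏ i : Fin N, (2 * T + 1) := by
          apply Finset.prod_le_prod
          · intros; positivity
          · intro i _
            rw [Int.card_Icc]
            rcases le_total 0 (⌊u i + T⌋ + 1 - ⌈u i - T⌉) with h | h
            · have h2 : (((⌊u i + T⌋ + 1 - ⌈u i - T⌉).toNat : ℤ) : ℝ)
                  = ((⌊u i + T⌋ + 1 - ⌈u i - T⌉ : ℤ) : ℝ) := by
                rw [Int.toNat_of_nonneg h]
              rw [Int.cast_natCast] at h2
              rw [h2]
              push_cast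
              linarith [Int.floor_le (u i + T), Int.le_ceil (u i - T)]
            · rw [Int.toNat_of_nonpos h]
              push_cast
              linarith
      _ = _ := by simp
  have hbdd : BddAbove (Set.range fun u : Fin N → ℝ =>
      ∑' k : Fin N → ℤ, |χ (fun i => u i - (k i : ℝ))|) := by
    refine ⟨(2 * T + 1) ^ N * C, ?_⟩
    rintro _ ⟨u, rfl⟩
    simp only
    rw [habs u]
    calc _ ≤ ∑ k ∈ S u, C := Finset.sum_le_sum fun k _ => hχb _
      _ = (S u).card * C := by simp
      _ ≤ _ := mul_le_mul_of_nonneg_right (hcard u) hC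
  set D : Set ℝ := {d : ℝ | ∃ u v : Fin N → ℝ,
          (∀ i, u i ∈ Set.Icc (t i - (T + 1) / w) (t i + (T + 1) / w)) ∧
          (∀ i, v i ∈ Set.Icc (t i - (T + 1) / w) (t i + (T + 1) / w)) ∧
          d = |f u - f v|} with hD
  have hDb : BddAbove D := by
    refine ⟨2 * M, ?_⟩
    rintro _ ⟨u, v, _, _, rfl⟩
    have h1 := abs_le.1 (hfb u)
    have h2 := abs_le.1 (hfb v)
    rw [abs_le]
    constructor <;> linarith [h1.1, h1.2, h2.1, h2.2]
  have hD0 : 0 ≤ sSup D := by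
    apply Real.sSup_nonneg
    rintro _ ⟨u, v, _, _, rfl⟩
    exact abs_nonneg _
  set y : Fin N → ℝ := fun i => w * t i with hy
  set a : (Fin N → ℤ) → ℝ := fun k => w * ∫ u in ((k j : ℝ) / w)..(((k j : ℝ) + 1) / w),
      f (Function.update (fun i => (k i : ℝ) / w) j u) with ha
  have hop : kantOp χ j w f t = ∑ k ∈ S y, a k * χ (fun i => y i - (k i : ℝ)) := by
    unfold kantOp
    apply tsum_eq_sum
    intro k hk
    have := hz y k hk
    simp only [hy] at this
    rw [this, mul_zero]
  have hone : ∑ k ∈ S y, χ (fun i => y i - (k i : ℝ)) = 1 :=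
    (hasSum_sum_of_ne_finset_zero (hz y)).unique (hpart y)
  have hdiff : kantOp χ j w f t - f t
      = ∑ k ∈ S y, (a k - f t) * χ (fun i => y i - (k i : ℝ)) := by
    simp only [sub_mul]
    rw [Finset.sum_sub_distrib, ← Finset.mul_sum, hone, hop, mul_one]
  have hkey : ∀ k : Fin N → ℤ, (∀ i, y i - (k i : ℝ) ∈ Set.Icc (-T) T) →
      |a k - f t| ≤ sSup D := by
    intro k hk
    have hle : (k j : ℝ) / w ≤ ((k j : ℝ) + 1) / w := by gcongr; linarith
    have hmeas : Measurable fun u : ℝ => f (Function.update (fun i => (k i : ℝ) / w) j u) :=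
      hfm.comp (measurable_update _)
    have hint : IntervalIntegrable (fun u : ℝ => f (Function.update (fun i => (k i : ℝ) / w) j u))
        volume ((k j : ℝ) / w) (((k j : ℝ) + 1) / w) := by
      apply (intervalIntegrable_const (c := M)).mono_fun hmeas.aestronglyMeasurable
      filter_upwards with u
      rw [Real.norm_eq_abs, Real.norm_eq_abs]
      exact (hfb _).trans (le_abs_self M)
    have hlen : ((k j : ℝ) + 1) / w - (k j : ℝ) / w = 1 / w := by ring
    have hform : a k - f t = w * ∫ u in ((k j : ℝ) / w)..(((k j : ℝ) + 1) / w),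
        (f (Function.update (fun i => (k i : ℝ) / w) j u) - f t) := by
      rw [intervalIntegral.integral_sub hint intervalIntegrable_const,
        intervalIntegral.integral_const, hlen, mul_sub, smul_eq_mul]
      simp only [ha]
      field_simp
    have hb : ‖∫ u in ((k j : ℝ) / w)..(((k j : ℝ) + 1) / w),
        (f (Function.update (fun i => (k i : ℝ) / w) j u) - f t)‖
        ≤ sSup D * |((k j : ℝ) + 1) / w - (k j : ℝ) / w| := by
      apply intervalIntegral.norm_integral_le_of_norm_le_const
      intro u hu
      rw [Set.uIoc_of_le hle] at hu
      rw [Real.norm_eq_abs]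
      apply le_csSup hDb
      refine ⟨_, t, ?_, ?_, rfl⟩
      · intro i
        have h1 := hk i
        simp only [hy, Set.mem_Icc] at h1
        have hu1 := hu.1
        have hu2 := hu.2
        rw [div_lt_iff₀ hw] at hu1
        rw [le_div_iff₀ hw] at hu2
        have e1 : t i - (T + 1) / w = (w * t i - (T + 1)) / w := by field_simp
        have e2 : t i + (T + 1) / w = (w * t i + (T + 1)) / w := by field_simp
        rw [e1, e2, Set.mem_Icc, div_le_iff₀ hw, le_div_iff₀ hw]
        by_cases hij : i = j
        · subst hij
          rw [Function.update_self]
          constructor <;> linarith [h1.1, h1.2]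
        · rw [Function.update_of_ne hij, div_mul_cancel₀ _ hw.ne']
          constructor <;> linarith [h1.1, h1.2]
      · intro i
        have : 0 ≤ (T + 1) / w := by positivity
        constructor <;> linarith
    rw [hlen, abs_of_pos (by positivity), Real.norm_eq_abs] at hb
    rw [hform, abs_mul, abs_of_pos hw]
    calc _ ≤ w * (sSup D * (1 / w)) := mul_le_mul_of_nonneg_left hb hw.le
      _ = sSup D := by field_simp
  rw [hdiff]
  calc _ ≤ ∑ k ∈ S y, |(a k - f t) * χ (fun i => y i - (k i : ℝ))| :=
        Finset.abs_sum_le_sum_abs _ _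
    _ ≤ ∑ k ∈ S y, |χ (fun i => y i - (k i : ℝ))| * sSup D := by
        apply Finset.sum_le_sum
        intro k _
        rw [abs_mul, mul_comm]
        by_cases h : ∀ i, y i - (k i : ℝ) ∈ Set.Icc (-T) T
        · exact mul_le_mul_of_nonneg_left (hkey k h) (abs_nonneg _)
        · rw [hsupp (fun i => y i - (k i : ℝ)) h]
          simp
    _ = (∑' k : Fin N → ℤ, |χ (fun i => y i - (k i : ℝ))|) * sSup D := by
        rw [habs, Finset.sum_mul]
    _ ≤ _ := mul_le_mul_of_nonneg_right (le_ciSup hbdd y) hD0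
end

section
/- Let χ : ℝ^N → ℝ be bounded and measurable with χ(t) = 0 for t ∉ [−T,T]^N (some T > 0) and ∑_{k∈ℤ^N} χ(u−k) = 1 for every u ∈ ℝ^N; set A_χ := sup_u ∑_{k∈ℤ^N} |χ(u−k)|. Let 1 ≤ p < +∞ and let f : ℝ^N → ℝ be bounded, measurable and continuous at almost every point of ℝ^N. For δ > 0 let ω(f;x,δ) := sup{ |f(u) − f(v)| : u, v ∈ ∏_{i=1}^N [x_i − δ, x_i + δ] }. Then for every j ∈ {1,…,N} and every w > 0, ‖K_{w,j} f − f‖_{L^p(ℝ^N)} ≤ A_χ ‖ω(f; ·, (T+1)/w)‖_{L^p(ℝ^N)}. -/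
open MeasureTheory
open scoped ENNReal

/-- The local (first-order) modulus of smoothness
`ω(f; x, δ) = sup { |f(u) − f(v)| : u, v ∈ ∏ᵢ [xᵢ − δ, xᵢ + δ] }`. -/
noncomputable def localOsc {N : ℕ} (f : (Fin N → ℝ) → ℝ) (x : Fin N → ℝ) (δ : ℝ) : ℝ :=
  sSup {d : ℝ | ∃ u v : Fin N → ℝ,
    (∀ i, u i ∈ Set.Icc (x i - δ) (x i + δ)) ∧
    (∀ i, v i ∈ Set.Icc (x i - δ) (x i + δ)) ∧ d = |f u - f v|}

theorem aux_finset (N : ℕ) (T : ℝ) (hT : 0 < T) (χ : (Fin N → ℝ) → ℝ)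
    (hsupp : ∀ s : Fin N → ℝ, (¬ ∀ i, s i ∈ Set.Icc (-T) T) → χ s = 0) (u : Fin N → ℝ) :
    ∃ S : Finset (Fin N → ℤ), (S.card : ℝ) ≤ (2 * T + 1) ^ N ∧
      ∀ k ∉ S, χ (fun i => u i - (k i : ℝ)) = 0 := by
  refine ⟨Fintype.piFinset (fun i => Finset.Icc ⌈u i - T⌉ ⌊u i + T⌋), ?_, ?_⟩
  · rw [Fintype.card_piFinset]
    push_cast
    calc _ ≤ ∏ _i : Fin N, (2 * T + 1) := by
          apply Finset.prod_le_prod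
          · intro i _; positivity
          · intro i _
            rw [Int.card_Icc]
            have h1 := Int.le_ceil (u i - T)
            have h2 := Int.floor_le (u i + T)
            have h3 : (((⌊u i + T⌋ + 1 - ⌈u i - T⌉).toNat : ℤ) : ℝ) ≤ 2 * T + 1 := by
              rw [Int.toNat_eq_max]
              push_cast
              apply max_le <;> linarith
            exact_mod_cast h3
      _ = _ := by simp
  · intro k hk
    apply hsupp
    intro h
    apply hk
    rw [Fintype.mem_piFinset]
    intro i
    have := h i
    rw [Finset.mem_Icc, Int.ceil_le, Int.le_floor]
    constructor <;> linarith [this.1, this.2]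

theorem aux_osc {N : ℕ} (f : (Fin N → ℝ) → ℝ) (M : ℝ) (hfb : ∀ s, |f s| ≤ M)
    (x u v : Fin N → ℝ) (δ : ℝ)
    (hu : ∀ i, u i ∈ Set.Icc (x i - δ) (x i + δ))
    (hv : ∀ i, v i ∈ Set.Icc (x i - δ) (x i + δ)) : |f u - f v| ≤ localOsc f x δ := by
  apply le_csSup
  · refine ⟨M + M, ?_⟩
    rintro d ⟨a, b, _, _, rfl⟩
    exact (abs_sub _ _).trans (add_le_add (hfb a) (hfb b))
  · exact ⟨u, v, hu, hv, rfl⟩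

theorem aux_mean {N : ℕ} (T : ℝ) (hT : 0 < T)
    (f : (Fin N → ℝ) → ℝ) (hfm : Measurable f) (M : ℝ) (hfb : ∀ s, |f s| ≤ M)
    (j : Fin N) (w : ℝ) (hw : 0 < w) (t : Fin N → ℝ) (k : Fin N → ℤ)
    (hk : ∀ i, w * t i - (k i : ℝ) ∈ Set.Icc (-T) T) :
    |(w * ∫ u in ((k j : ℝ) / w)..(((k j : ℝ) + 1) / w),
      f (Function.update (fun i => (k i : ℝ) / w) j u)) - f t| ≤ localOsc f t ((T + 1) / w) := by
  have hint : IntervalIntegrable (fun u => f (Function.update (fun i => (k i : ℝ) / w) j u))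
      volume ((k j : ℝ) / w) (((k j : ℝ) + 1) / w) := by
    refine IntervalIntegrable.mono_fun (f := fun _ => M) (intervalIntegrable_const (μ := volume)) ?_ ?_
    · exact (hfm.comp (measurable_update _)).aestronglyMeasurable
    · refine Filter.Eventually.of_forall fun u => ?_
      exact (hfb _).trans (le_abs_self M)
  have hlen : ((k j : ℝ) + 1) / w - (k j : ℝ) / w = 1 / w := by ring
  have e : (w * ∫ u in ((k j : ℝ) / w)..(((k j : ℝ) + 1) / w),
      f (Function.update (fun i => (k i : ℝ) / w) j u)) - f t
      = w * ∫ u in ((k j : ℝ) / w)..(((k j : ℝ) + 1) / w),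
      (f (Function.update (fun i => (k i : ℝ) / w) j u) - f t) := by
    rw [intervalIntegral.integral_sub hint intervalIntegrable_const,
      intervalIntegral.integral_const, hlen, smul_eq_mul]
    field_simp
  have hle : (k j : ℝ) / w ≤ ((k j : ℝ) + 1) / w := by gcongr; linarith
  have hb := intervalIntegral.norm_integral_le_of_norm_le_const
    (a := (k j : ℝ) / w) (b := ((k j : ℝ) + 1) / w) (C := localOsc f t ((T + 1) / w))
    (f := fun u => f (Function.update (fun i => (k i : ℝ) / w) j u) - f t) (by
      intro u hu
      rw [Set.uIoc_of_le hle] at hu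
      have hu1 := hu.1
      have hu2 := hu.2
      rw [div_lt_iff₀ hw] at hu1
      rw [le_div_iff₀ hw] at hu2
      refine aux_osc f M hfb t _ t _ ?_ ?_
      · intro i
        have e1 : t i - (T + 1) / w = (w * t i - (T + 1)) / w := by field_simp
        have e2 : t i + (T + 1) / w = (w * t i + (T + 1)) / w := by field_simp
        have h1 := (hk i).1
        have h2 := (hk i).2
        rw [e1, e2, Set.mem_Icc]
        by_cases hij : i = j
        · subst hij
          rw [Function.update_self, div_le_iff₀ hw, le_div_iff₀ hw]
          constructor <;> linarith
        · rw [Function.update_of_ne hij]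
          constructor <;> gcongr <;> linarith
      · intro i
        have : 0 < (T + 1) / w := by positivity
        constructor <;> linarith)
  rw [e, abs_mul, abs_of_pos hw]
  rw [hlen, Real.norm_eq_abs, abs_of_pos (by positivity : 0 < 1 / w)] at hb
  calc _ ≤ w * (localOsc f t ((T + 1) / w) * (1 / w)) := by gcongr
    _ = _ := by field_simp

/-- for a bounded measurable kernel `χ : ℝ^N → ℝ` supported in `[−T,T]^N` with
`∑_{k∈ℤ^N} χ(u−k) = 1` for all `u`, `1 ≤ p < ∞`, and `f` bounded, measurable and continuous at
almost every point, one has `‖K_{w,j} f − f‖_p ≤ A_χ ‖ω(f; ·, (T+1)/w)‖_p`. -/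
theorem kantorovich_Lp_tau_modulus_estimate
    (N : ℕ) (T : ℝ) (hT : 0 < T) (χ : (Fin N → ℝ) → ℝ)
    (hχm : Measurable χ) (C : ℝ) (hχb : ∀ s, |χ s| ≤ C)
    (hsupp : ∀ s : Fin N → ℝ, (¬ ∀ i, s i ∈ Set.Icc (-T) T) → χ s = 0)
    (hpart : ∀ u : Fin N → ℝ, HasSum (fun k : Fin N → ℤ => χ (fun i => u i - (k i : ℝ))) 1)
    (p : ℝ≥0∞) (hp1 : 1 ≤ p) (hp2 : p ≠ ⊤)
    (f : (Fin N → ℝ) → ℝ) (hfm : Measurable f) (M : ℝ) (hfb : ∀ s, |f s| ≤ M)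
    (hfc : ∀ᵐ x : Fin N → ℝ, ContinuousAt f x)
    (j : Fin N) (w : ℝ) (hw : 0 < w) :
    eLpNorm (fun t => kantOp χ j w f t - f t) p volume ≤
      ENNReal.ofReal (⨆ u : Fin N → ℝ, ∑' k : Fin N → ℤ, |χ (fun i => u i - (k i : ℝ))|) *
        eLpNorm (fun x => localOsc f x ((T + 1) / w)) p volume := by
  have hbdd : BddAbove (Set.range fun u : Fin N → ℝ =>
      ∑' k : Fin N → ℤ, |χ (fun i => u i - (k i : ℝ))|) := by
    refine ⟨(2 * T + 1) ^ N * C, ?_⟩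
    rintro _ ⟨u, rfl⟩
    obtain ⟨S, hS, h0⟩ := aux_finset N T hT χ hsupp u
    have hC : 0 ≤ C := (abs_nonneg _).trans (hχb 0)
    dsimp only
    rw [tsum_eq_sum (s := S) (fun k hk => by rw [h0 k hk, abs_zero])]
    calc _ ≤ ∑ _k ∈ S, C := Finset.sum_le_sum fun k _ => hχb _
      _ = S.card * C := by simp
      _ ≤ _ := by gcongr
  refine eLpNorm_le_mul_eLpNorm_of_ae_le_mul (Filter.Eventually.of_forall fun t => ?_) p
  have hc := hpart (fun i => w * t i)
  obtain ⟨S, -, h0⟩ := aux_finset N T hT χ hsupp (fun i => w * t i)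
  have hosc : 0 ≤ localOsc f t ((T + 1) / w) := by
    have : 0 < (T + 1) / w := by positivity
    have h : ∀ i, t i ∈ Set.Icc (t i - (T + 1) / w) (t i + (T + 1) / w) := fun i => by
      constructor <;> linarith
    exact (abs_nonneg _).trans (aux_osc f M hfb t t t _ h h)
  have e : kantOp χ j w f t - f t = ∑ k ∈ S,
      ((w * ∫ u in ((k j : ℝ) / w)..(((k j : ℝ) + 1) / w),
      f (Function.update (fun i => (k i : ℝ) / w) j u)) - f t) *
        χ (fun i => w * t i - (k i : ℝ)) := by
    have h1 : ∑ k ∈ S, χ (fun i => w * t i - (k i : ℝ)) = 1 := by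
      rw [← hc.tsum_eq, tsum_eq_sum (s := S) h0]
    have h2 : kantOp χ j w f t = ∑ k ∈ S, (w * ∫ u in ((k j : ℝ) / w)..(((k j : ℝ) + 1) / w),
      f (Function.update (fun i => (k i : ℝ) / w) j u)) * χ (fun i => w * t i - (k i : ℝ)) :=
      tsum_eq_sum (s := S) (fun k hk => by rw [h0 k hk, mul_zero])
    simp only [sub_mul, Finset.sum_sub_distrib]
    rw [← Finset.mul_sum, h1, h2, mul_one]
  rw [e, Real.norm_eq_abs, Real.norm_eq_abs, abs_of_nonneg hosc]
  calc _ ≤ ∑ k ∈ S, localOsc f t ((T + 1) / w) * |χ (fun i => w * t i - (k i : ℝ))| := by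
        refine (Finset.abs_sum_le_sum_abs _ _).trans (Finset.sum_le_sum fun k _ => ?_)
        rw [abs_mul]
        by_cases hk : ∀ i, w * t i - (k i : ℝ) ∈ Set.Icc (-T) T
        · gcongr
          exact aux_mean T hT f hfm M hfb j w hw t k hk
        · rw [hsupp _ hk]; simp
    _ = localOsc f t ((T + 1) / w) * ∑' k : Fin N → ℤ, |χ (fun i => w * t i - (k i : ℝ))| := by
        rw [← Finset.mul_sum, tsum_eq_sum (s := S) (fun k hk => by rw [h0 k hk, abs_zero])]
    _ ≤ _ := by
        rw [mul_comm]
        gcongr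
        exact le_ciSup hbdd (fun i => w * t i)
end

section
/- Let χ : ℝ^N → ℝ be bounded and measurable with χ(t) = 0 for t ∉ [−T,T]^N (some T > 0) and ∑_{k∈ℤ^N} χ(u−k) = 1 for every u ∈ ℝ^N. Let 1 ≤ p < +∞ and let f : ℝ^N → ℝ be bounded, measurable, continuous at almost every point of ℝ^N, and such that ‖f‖_{l^p(Σ)} < +∞ for every admissible sequence Σ (i.e. f ∈ Λ^p). Then for every j ∈ {1,…,N}, lim_{w→+∞} ‖K_{w,j} f − f‖_{L^p(ℝ^N)} = 0. -/
open MeasureTheory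
open scoped ENNReal

/-- An admissible partition of an axis: a sequence of points whose consecutive gaps are
bounded below by a positive constant and bounded above. -/
def AdmissiblePartition (x : ℤ → ℝ) : Prop :=
  (∃ δ : ℝ, 0 < δ ∧ ∀ n : ℤ, δ ≤ x n - x (n - 1)) ∧ (∃ Δ : ℝ, ∀ n : ℤ, x n - x (n - 1) ≤ Δ)


lemma kant_finset (N : ℕ) (T : ℝ) (hT : 0 < T) (χ : (Fin N → ℝ) → ℝ)
    (hsupp : ∀ s : Fin N → ℝ, (¬ ∀ i, s i ∈ Set.Icc (-T) T) → χ s = 0) (v : Fin N → ℝ) :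
    ∃ A : Finset (Fin N → ℤ), (∀ k ∈ A, ∀ i, |v i - (k i : ℝ)| ≤ T) ∧
      (∀ k, k ∉ A → χ (fun i => v i - (k i : ℝ)) = 0) ∧ (A.card : ℝ) ≤ (2 * T + 1) ^ N := by
  refine ⟨Fintype.piFinset (fun i => Finset.Icc ⌈v i - T⌉ ⌊v i + T⌋), ?_, ?_, ?_⟩
  · intro k hk i
    have h := Fintype.mem_piFinset.1 hk i
    rw [Finset.mem_Icc, Int.ceil_le, Int.le_floor] at h
    rw [abs_le]
    constructor <;> linarith [h.1, h.2]
  · intro k hk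
    apply hsupp
    intro h
    apply hk
    rw [Fintype.mem_piFinset]
    intro i
    have := h i
    rw [Finset.mem_Icc, Int.ceil_le, Int.le_floor]
    constructor <;> linarith [this.1, this.2]
  · rw [Fintype.card_piFinset]
    push_cast
    calc ∏ i, ((Finset.Icc ⌈v i - T⌉ ⌊v i + T⌋).card : ℝ) ≤ ∏ i : Fin N, (2 * T + 1) := by
          apply Finset.prod_le_prod
          · intros; positivity
          · intro i _
            rw [Int.card_Icc]
            have h1 := Int.le_ceil (v i - T)
            have h2 := Int.floor_le (v i + T)
            have h3 : (((⌊v i + T⌋ + 1 - ⌈v i - T⌉).toNat : ℤ) : ℝ)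
                = max (⌊v i + T⌋ + 1 - ⌈v i - T⌉ : ℝ) 0 := by
              rw [Int.toNat_eq_max]; push_cast; rfl
            rw [Int.cast_natCast] at h3
            rw [h3]
            apply max_le <;> linarith
      _ = _ := by simp

lemma kant_key (N : ℕ) (T : ℝ) (hT : 0 < T) (χ : (Fin N → ℝ) → ℝ)
    (C : ℝ) (hχb : ∀ s, |χ s| ≤ C)
    (hsupp : ∀ s : Fin N → ℝ, (¬ ∀ i, s i ∈ Set.Icc (-T) T) → χ s = 0)
    (hpart : ∀ u : Fin N → ℝ, HasSum (fun k : Fin N → ℤ => χ (fun i => u i - (k i : ℝ))) 1)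
    (f : (Fin N → ℝ) → ℝ) (hfm : Measurable f) (M : ℝ) (hfb : ∀ s, |f s| ≤ M)
    (j : Fin N) (w : ℝ) (hw : 0 < w) (t : Fin N → ℝ) (c b : ℝ) (hb0 : 0 ≤ b)
    (hb : ∀ y : Fin N → ℝ, (∀ i, |y i - t i| ≤ (T + 1) / w) → |f y - c| ≤ b) :
    |kantOp χ j w f t - c| ≤ (C * (2 * T + 1) ^ N) * b := by
  have hC : 0 ≤ C := (abs_nonneg _).trans (hχb 0)
  obtain ⟨A, hA1, hA2, hA3⟩ := kant_finset N T hT χ hsupp (fun i => w * t i)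
  have h1 : ∑ k ∈ A, χ (fun i => w * t i - (k i : ℝ)) = 1 := by
    rw [← (hpart (fun i => w * t i)).tsum_eq]
    exact (tsum_eq_sum (fun k hk => hA2 k hk)).symm
  have h2 : kantOp χ j w f t - c = ∑ k ∈ A,
    ((w * ∫ u in ((k j : ℝ) / w)..(((k j : ℝ) + 1) / w),
      f (Function.update (fun i => (k i : ℝ) / w) j u)) - c) *
    χ (fun i => w * t i - (k i : ℝ)) := by
    unfold kantOp
    rw [tsum_eq_sum (s := A) (fun k hk => by rw [hA2 k hk, mul_zero])]
    simp_rw [sub_mul]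
    rw [Finset.sum_sub_distrib, ← Finset.mul_sum, h1, mul_one]
  rw [h2]
  refine (Finset.abs_sum_le_sum_abs _ _).trans ?_
  have h3 : ∀ k ∈ A, |((w * ∫ u in ((k j : ℝ) / w)..(((k j : ℝ) + 1) / w),
      f (Function.update (fun i => (k i : ℝ) / w) j u)) - c) *
    χ (fun i => w * t i - (k i : ℝ))| ≤ b * C := by
    intro k hk
    rw [abs_mul]
    refine mul_le_mul ?_ (hχb _) (abs_nonneg _) hb0
    have hm : Measurable (fun u : ℝ => f (Function.update (fun i => (k i : ℝ) / w) j u)) :=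
      hfm.comp (measurable_update _)
    have hint : IntervalIntegrable (fun u : ℝ => f (Function.update (fun i => (k i : ℝ) / w) j u))
        volume ((k j : ℝ) / w) (((k j : ℝ) + 1) / w) := by
      refine (intervalIntegrable_const (c := M)).mono_fun hm.aestronglyMeasurable ?_
      refine Filter.Eventually.of_forall (fun u => ?_)
      simp only [Real.norm_eq_abs]
      exact (hfb _).trans (le_abs_self _)
    have he : (w * ∫ u in ((k j : ℝ) / w)..(((k j : ℝ) + 1) / w),
      f (Function.update (fun i => (k i : ℝ) / w) j u)) - c =
      w * ∫ u in ((k j : ℝ) / w)..(((k j : ℝ) + 1) / w),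
      (f (Function.update (fun i => (k i : ℝ) / w) j u) - c) := by
      rw [intervalIntegral.integral_sub hint intervalIntegrable_const,
        intervalIntegral.integral_const, smul_eq_mul]
      field_simp
      ring
    rw [he, abs_mul, abs_of_pos hw]
    have h4 := intervalIntegral.norm_integral_le_of_norm_le_const
      (a := (k j : ℝ) / w) (b := ((k j : ℝ) + 1) / w) (C := b)
      (f := fun u => f (Function.update (fun i => (k i : ℝ) / w) j u) - c) (by
        intro u hu
        apply hb
        intro i
        have hki := abs_le.1 (hA1 k hk i)
        have e1 : (k i : ℝ) / w - t i = - (w * t i - k i) / w := by field_simp; ring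
        have hlow : -(T / w) ≤ (k i : ℝ) / w - t i := by
          rw [e1, ← neg_div]; gcongr; exact hki.2
        have hup : (k i : ℝ) / w - t i ≤ T / w := by
          rw [e1]; gcongr; linarith [hki.1]
        have hw1 : 0 < 1 / w := by positivity
        have e2 : (T + 1) / w = T / w + 1 / w := add_div _ _ _
        rw [abs_le, e2]
        by_cases hij : i = j
        · subst hij
          have e3 : ((k i : ℝ) + 1) / w = k i / w + 1 / w := add_div _ _ _
          rw [e3, Set.uIoc_of_le (by linarith)] at hu
          simp only [Function.update_self]
          constructor <;> linarith [hu.1, hu.2]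
        · rw [Function.update_of_ne hij]
          constructor <;> linarith)
    have e4 : |((k j : ℝ) + 1) / w - k j / w| = 1 / w := by
      rw [← sub_div, add_sub_cancel_left, abs_of_pos (by positivity)]
    rw [e4, Real.norm_eq_abs] at h4
    calc _ ≤ w * (b * (1 / w)) := by gcongr
      _ = b := by field_simp
  calc _ ≤ ∑ k ∈ A, b * C := Finset.sum_le_sum h3
    _ = A.card * (b * C) := by simp
    _ ≤ (2 * T + 1) ^ N * (b * C) := by gcongr
    _ = _ := by ring

lemma kant_measurable_aux (N : ℕ) (T : ℝ) (hT : 0 < T) (χ : (Fin N → ℝ) → ℝ)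
    (hχm : Measurable χ)
    (hsupp : ∀ s : Fin N → ℝ, (¬ ∀ i, s i ∈ Set.Icc (-T) T) → χ s = 0)
    (a : (Fin N → ℤ) → ℝ) (w : ℝ) :
    Measurable (fun t : Fin N → ℝ => ∑' k, a k * χ (fun i => w * t i - (k i : ℝ))) := by
  have hs : ∀ t : Fin N → ℝ, Summable (fun k => a k * χ (fun i => w * t i - (k i : ℝ))) := by
    intro t
    obtain ⟨A, hA1, hA2, hA3⟩ := kant_finset N T hT χ hsupp (fun i => w * t i)
    exact summable_of_ne_finset_zero (s := A) (fun k hk => by rw [hA2 k hk, mul_zero])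
  have hm : ∀ A : Finset (Fin N → ℤ), Measurable
      (fun t : Fin N → ℝ => ∑ k ∈ A, a k * χ (fun i => w * t i - (k i : ℝ))) := by
    intro A
    refine Finset.measurable_fun_sum _ (fun k _ => ?_)
    refine Measurable.const_mul (hχm.comp ?_) _
    fun_prop
  refine measurable_of_tendsto_metrizable' (Filter.atTop : Filter (Finset (Fin N → ℤ))) hm ?_
  rw [tendsto_pi_nhds]
  intro t
  have := (hs t).hasSum
  rw [HasSum, SummationFilter.unconditional_filter] at this
  exact this

lemma kant_measurable (N : ℕ) (T : ℝ) (hT : 0 < T) (χ : (Fin N → ℝ) → ℝ) (hχm : Measurable χ)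
    (hsupp : ∀ s : Fin N → ℝ, (¬ ∀ i, s i ∈ Set.Icc (-T) T) → χ s = 0)
    (f : (Fin N → ℝ) → ℝ) (j : Fin N) (w : ℝ) : Measurable (kantOp χ j w f) :=
  kant_measurable_aux N T hT χ hχm hsupp
    (fun k => w * ∫ u in ((k j : ℝ) / w)..(((k j : ℝ) + 1) / w),
      f (Function.update (fun i => (k i : ℝ) / w) j u)) w

lemma floor_lintegral (N : ℕ) (g : (Fin N → ℤ) → ℝ≥0∞) :
    ∫⁻ t : Fin N → ℝ, g (fun i => ⌊t i⌋) = ∑' k, g k := by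
  have hm : Measurable (fun t : Fin N → ℝ => (fun i => ⌊t i⌋ : Fin N → ℤ)) := by
    fun_prop
  have hg : Measurable g := measurable_of_countable g
  rw [← lintegral_map hg hm, lintegral_countable']
  congr 1
  ext k
  rw [Measure.map_apply hm (measurableSet_singleton k)]
  have : (fun t : Fin N → ℝ => (fun i => ⌊t i⌋ : Fin N → ℤ)) ⁻¹' {k}
      = Set.pi Set.univ (fun i => Set.Ico (k i : ℝ) (k i + 1)) := by
    ext t
    simp [funext_iff, Int.floor_eq_iff]
  rw [this, volume_pi_pi]
  simp

lemma kant_dom (N : ℕ) (R : ℝ)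
    (p : ℝ) (hp : 1 ≤ p)
    (f : (Fin N → ℝ) → ℝ) (M : ℝ) (hfb : ∀ s, |f s| ≤ M)
    (hΛ : ∀ x : Fin N → ℤ → ℝ, (∀ i, AdmissiblePartition (x i)) →
      Summable (fun k : Fin N → ℤ =>
        sSup {d : ℝ | ∃ y : Fin N → ℝ,
            (∀ i, y i ∈ Set.Ico (x i (k i - 1)) (x i (k i))) ∧ d = |f y| ^ p} *
          ∏ i, (x i (k i) - x i (k i - 1)))) :
    ∃ G : (Fin N → ℝ) → ℝ, (∀ t, 0 ≤ G t) ∧ (∫⁻ t, ENNReal.ofReal (G t) ≠ ∞) ∧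
      ∀ t y : Fin N → ℝ, (∀ i, |y i - t i| ≤ R) → |f y| ^ p ≤ G t := by
  have h := hΛ (fun _ n => (n : ℝ)) (fun i => ⟨⟨1, one_pos, fun n => by simp⟩,
    ⟨1, fun n => by simp⟩⟩)
  simp only [Int.cast_sub, Int.cast_one, sub_sub_cancel, Finset.prod_const_one, mul_one] at h
  set S : (Fin N → ℤ) → ℝ := fun k => sSup {d : ℝ | ∃ y : Fin N → ℝ,
            (∀ i, y i ∈ Set.Ico ((k i : ℝ) - 1) (k i)) ∧ d = |f y| ^ p} with hS
  have hS0 : ∀ k, 0 ≤ S k := by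
    intro k
    apply Real.sSup_nonneg
    rintro d ⟨y, -, rfl⟩
    positivity
  have hSle : ∀ k (y : Fin N → ℝ), (∀ i, ⌊y i⌋ = k i - 1) → |f y| ^ p ≤ S k := by
    intro k y hy
    apply le_csSup
    · refine ⟨M ^ p, ?_⟩
      rintro d ⟨y, -, rfl⟩
      exact Real.rpow_le_rpow (abs_nonneg _) (hfb y) (by linarith)
    · refine ⟨y, fun i => ?_, rfl⟩
      have := Int.floor_eq_iff.1 (hy i)
      push_cast at this
      exact ⟨this.1, by linarith [this.2]⟩
  set B : Finset (Fin N → ℤ) := Fintype.piFinset (fun _ => Finset.Icc (-⌈R⌉) ⌈R⌉)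
  refine ⟨fun t => ∑ m ∈ B, S (fun i => ⌊t i⌋ + (1 + m i)), ?_, ?_, ?_⟩
  · intro t
    exact Finset.sum_nonneg (fun _ _ => hS0 _)
  · have hfin : ∀ m : Fin N → ℤ, ∑' k : Fin N → ℤ, ENNReal.ofReal (S (fun i => k i + (1 + m i))) ≠ ∞ := by
      intro m
      have h2 : Summable (fun k : Fin N → ℤ => S (fun i => k i + (1 + m i))) :=
        h.comp_injective (i := fun k : Fin N → ℤ => (fun i => k i + (1 + m i)))
          (fun a b hab => by
            ext i
            have := congrFun hab i
            simpa using this)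
      exact h2.tsum_ofReal_ne_top
    have e : ∀ t : Fin N → ℝ, ENNReal.ofReal (∑ m ∈ B, S (fun i => ⌊t i⌋ + (1 + m i)))
        = ∑ m ∈ B, ENNReal.ofReal (S (fun i => ⌊t i⌋ + (1 + m i))) := fun t =>
      ENNReal.ofReal_sum_of_nonneg (fun _ _ => hS0 _)
    simp_rw [e]
    rw [lintegral_finsetSum]
    · refine (ENNReal.sum_lt_top.2 (fun m _ => ?_)).ne
      rw [floor_lintegral N (fun k => ENNReal.ofReal (S (fun i => k i + (1 + m i))))]
      exact (hfin m).lt_top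
    · intro m _
      have hm : Measurable (fun t : Fin N → ℝ => (fun i => ⌊t i⌋ : Fin N → ℤ)) := by
        fun_prop
      exact (measurable_of_countable
        (fun k : Fin N → ℤ => ENNReal.ofReal (S (fun i => k i + (1 + m i))))).comp hm
  · intro t y hy
    refine (hSle (fun i => ⌊t i⌋ + (1 + (⌊y i⌋ - ⌊t i⌋))) y (fun i => by ring)).trans ?_
    refine Finset.single_le_sum (f := fun m : Fin N → ℤ => S (fun i => ⌊t i⌋ + (1 + m i)))
      (fun _ _ => hS0 _) (a := fun i => ⌊y i⌋ - ⌊t i⌋) ?_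
    rw [Fintype.mem_piFinset]
    intro i
    have h1 := abs_le.1 (hy i)
    have h2 := Int.le_ceil R
    rw [Finset.mem_Icc]
    have h3 : ⌊y i⌋ ≤ ⌊t i + ⌈R⌉⌋ := Int.floor_mono (by linarith [h1.2])
    have h4 : ⌊t i⌋ ≤ ⌊y i + ⌈R⌉⌋ := Int.floor_mono (by linarith [h1.1])
    rw [Int.floor_add_intCast] at h3 h4
    constructor <;> linarith

/-- for a bounded measurable kernel `χ : ℝ^N → ℝ` supported in `[−T,T]^N` with
`∑_{k∈ℤ^N} χ(u−k) = 1` for all `u`, `1 ≤ p < ∞`, and `f : ℝ^N → ℝ` bounded, measurable,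
continuous at almost every point and belonging to `Λ^p` (finite `l^p(Σ)`-norm for every
admissible sequence `Σ`), one has `lim_{w→∞} ‖K_{w,j} f − f‖_{L^p} = 0` for every `j`. -/
theorem kantorovich_Lp_convergence
    (N : ℕ) (T : ℝ) (hT : 0 < T) (χ : (Fin N → ℝ) → ℝ)
    (hχm : Measurable χ) (C : ℝ) (hχb : ∀ s, |χ s| ≤ C)
    (hsupp : ∀ s : Fin N → ℝ, (¬ ∀ i, s i ∈ Set.Icc (-T) T) → χ s = 0)
    (hpart : ∀ u : Fin N → ℝ, HasSum (fun k : Fin N → ℤ => χ (fun i => u i - (k i : ℝ))) 1)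
    (p : ℝ) (hp : 1 ≤ p)
    (f : (Fin N → ℝ) → ℝ) (hfm : Measurable f) (M : ℝ) (hfb : ∀ s, |f s| ≤ M)
    (hfc : ∀ᵐ x : Fin N → ℝ, ContinuousAt f x)
    (hΛ : ∀ x : Fin N → ℤ → ℝ, (∀ i, AdmissiblePartition (x i)) →
      Summable (fun k : Fin N → ℤ =>
        sSup {d : ℝ | ∃ y : Fin N → ℝ,
            (∀ i, y i ∈ Set.Ico (x i (k i - 1)) (x i (k i))) ∧ d = |f y| ^ p} *
          ∏ i, (x i (k i) - x i (k i - 1))))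
    (j : Fin N) :
    Filter.Tendsto
      (fun w : ℝ => eLpNorm (fun t => kantOp χ j w f t - f t) (ENNReal.ofReal p) volume)
      Filter.atTop (nhds 0) := by
  have hC : 0 ≤ C := (abs_nonneg _).trans (hχb 0)
  have hp0 : 0 < p := by linarith
  obtain ⟨G, hG0, hGi, hG⟩ := kant_dom N (T + 1) p hp f M hfb hΛ
  set D : ℝ := C * (2 * T + 1) ^ N with hD
  have hD0 : 0 ≤ D := by positivity
  have key := kant_key N T hT χ C hχb hsupp hpart f hfm M hfb j
  have hlim : Filter.Tendsto
      (fun w : ℝ => ∫⁻ t, ‖kantOp χ j w f t - f t‖ₑ ^ p) Filter.atTop (nhds 0) := by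
    have h0 : (0 : ℝ≥0∞) = ∫⁻ t : Fin N → ℝ, (0 : ℝ≥0∞) := by simp
    rw [h0]
    refine tendsto_lintegral_filter_of_dominated_convergence
      (fun t => ENNReal.ofReal ((D + 1) ^ p) * ENNReal.ofReal (G t)) ?_ ?_ ?_ ?_
    · refine Filter.Eventually.of_forall (fun w => ?_)
      exact (((kant_measurable N T hT χ hχm hsupp f j w).sub hfm).enorm).pow_const p
    · filter_upwards [Filter.eventually_ge_atTop (1 : ℝ)] with w hw
      refine Filter.Eventually.of_forall (fun t => ?_)
      have hb : ∀ y : Fin N → ℝ, (∀ i, |y i - t i| ≤ T + 1) → |f y| ≤ G t ^ (1 / p) := by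
        intro y hy
        rw [one_div, Real.le_rpow_inv_iff_of_pos (abs_nonneg _) (hG0 t) hp0]
        exact hG t y hy
      have h1 := key w (by linarith) t 0 (G t ^ (1 / p)) (Real.rpow_nonneg (hG0 t) _) (by
        intro y hy
        rw [sub_zero]
        exact hb y (fun i => (hy i).trans (div_le_self (by linarith) hw)))
      have h2 := hb t (fun i => by simp; linarith)
      rw [sub_zero] at h1
      have h3 : |kantOp χ j w f t - f t| ≤ (D + 1) * G t ^ (1 / p) := by
        refine (abs_sub _ _).trans ?_
        linarith
      have h4 : |kantOp χ j w f t - f t| ^ p ≤ (D + 1) ^ p * G t := by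
        refine (Real.rpow_le_rpow (abs_nonneg _) h3 hp0.le).trans_eq ?_
        rw [Real.mul_rpow (by linarith) (Real.rpow_nonneg (hG0 t) _), ← Real.rpow_mul (hG0 t),
          one_div_mul_cancel hp0.ne', Real.rpow_one]
      rw [← ENNReal.ofReal_mul (by positivity), Real.enorm_eq_ofReal_abs,
        ENNReal.ofReal_rpow_of_nonneg (abs_nonneg _) hp0.le]
      exact ENNReal.ofReal_le_ofReal h4
    · rw [lintegral_const_mul' _ _ ENNReal.ofReal_ne_top]
      exact ENNReal.mul_ne_top ENNReal.ofReal_ne_top hGi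
    · filter_upwards [hfc] with t ht
      have h1 : Filter.Tendsto (fun w : ℝ => kantOp χ j w f t - f t) Filter.atTop (nhds 0) := by
        rw [Metric.tendsto_nhds]
        intro ε hε
        rw [Metric.continuousAt_iff] at ht
        obtain ⟨δ, hδ, hd⟩ := ht (ε / (D + 1)) (by positivity)
        have h2 : Filter.Tendsto (fun w : ℝ => (T + 1) / w) Filter.atTop (nhds 0) :=
          tendsto_const_nhds.div_atTop Filter.tendsto_id
        filter_upwards [Filter.eventually_gt_atTop (0 : ℝ), h2.eventually_lt_const hδ] with w hw hw2
        have h3 := key w hw t (f t) (ε / (D + 1)) (by positivity) (by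
          intro y hy
          have := hd (x := y) (by
            rw [dist_pi_lt_iff hδ]
            intro i
            rw [Real.dist_eq]
            exact (hy i).trans_lt hw2)
          rw [Real.dist_eq] at this
          exact this.le)
        rw [Real.dist_eq, sub_zero]
        refine h3.trans_lt ?_
        rw [← mul_div_assoc, div_lt_iff₀ (by positivity)]
        nlinarith
      have h2 := (h1.enorm).ennrpow_const p
      simpa [hp0] using h2
  have hpe : ENNReal.ofReal p ≠ 0 := by simpa using hp0
  simp_rw [eLpNorm_eq_lintegral_rpow_enorm_toReal hpe ENNReal.ofReal_ne_top,
    ENNReal.toReal_ofReal hp0.le]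
  have h2 := hlim.ennrpow_const (1 / p)
  simpa [hp0] using h2
end

section
/- For i = 1,…,N let χ_i : ℝ → ℝ be continuous with compact support contained in [−T,T] (T > 0) and ∑_{k∈ℤ} χ_i(u−k) = 1 for every u ∈ ℝ. Let m ∈ ℕ, m ≥ 1, χ̄_{i,m}(t) := (1/m)∫_{-m/2}^{m/2} χ_i(t+v) dv. Let f : ℝ^N → ℝ be absolutely continuous in the sense of Tonelli (f ∈ BV(ℝ^N) ∩ AC_loc(ℝ^N)) and suppose that for each j = 1,…,N the a.e.-existing partial derivative ∂f/∂x_j has a representative g_j : ℝ^N → ℝ which is bounded, measurable, continuous at almost every point, satisfies ‖g_j‖_{l¹(Σ)} < +∞ for every admissible sequence Σ, and satisfies f(x'_j,b) − f(x'_j,a) = ∫_a^b g_j(x'_j,u) du for every x'_j ∈ ℝ^{N−1} and a < b. Then for every m ∈ ℕ, the multivariate generalized sampling series (S̄^m_w f)(t) := ∑_{k∈ℤ^N} f(k/w) ∏_{i=1}^N χ̄_{i,m}(w t_i − k_i) converges to f in variation: lim_{w→+∞} V[S̄^m_w f − f] = 0, where V denotes the Tonelli variation on ℝ^N. -/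
open MeasureTheory
open scoped ENNReal

/-- The point of `ℝ^N` whose `j`-th coordinate is `s` and whose remaining coordinates are
given by `x' : ℝ^{N−1}`. -/
def sect {N : ℕ} (j : Fin N) (x' : {i : Fin N // i ≠ j} → ℝ) (s : ℝ) : Fin N → ℝ :=
  fun i => if h : i = j then s else x' ⟨i, h⟩

/-- `Φ_j(f, I)` for the interval `I = ∏ᵢ [a i, b i]`. -/
noncomputable def PhiJ (N : ℕ) (f : (Fin N → ℝ) → ℝ) (a b : Fin N → ℝ) (j : Fin N) : ℝ≥0∞ :=
  ∫⁻ x' in {x' : {i : Fin N // i ≠ j} → ℝ | ∀ i, x' i ∈ Set.Icc (a i.1) (b i.1)},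
    eVariationOn (fun s => f (sect j x' s)) (Set.Icc (a j) (b j))

/-- `Φ(f, I)`: the Euclidean norm of the vector `(Φ_1(f,I), …, Φ_N(f,I))`. -/
noncomputable def PhiTot (N : ℕ) (f : (Fin N → ℝ) → ℝ) (a b : Fin N → ℝ) : ℝ≥0∞ :=
  (∑ j : Fin N, PhiJ N f a b j ^ 2) ^ (1 / 2 : ℝ)

/-- The finite family of `N`-dimensional intervals `[A k, B k]` forms a partition of
`∏ᵢ [a i, b i]`. -/
def IsBoxPartition (N p : ℕ) (a b : Fin N → ℝ) (A B : Fin p → Fin N → ℝ) : Prop :=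
  (∀ k i, a i ≤ A k i ∧ A k i ≤ B k i ∧ B k i ≤ b i) ∧
  ((Set.univ.pi fun i => Set.Icc (a i) (b i)) =
    ⋃ k, Set.univ.pi fun i => Set.Icc (A k i) (B k i)) ∧
  (∀ k l, k ≠ l → Disjoint (Set.univ.pi fun i => Set.Ioo (A k i) (B k i))
    (Set.univ.pi fun i => Set.Ioo (A l i) (B l i)))

/-- The Tonelli variation `V_I[f]` of `f` on the interval `I = ∏ᵢ [a i, b i]`. -/
noncomputable def tonelliVarOn (N : ℕ) (f : (Fin N → ℝ) → ℝ) (a b : Fin N → ℝ) : ℝ≥0∞ :=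
  ⨆ (p : ℕ) (A : Fin p → Fin N → ℝ) (B : Fin p → Fin N → ℝ)
    (_ : IsBoxPartition N p a b A B), ∑ k : Fin p, PhiTot N f (A k) (B k)

/-- The Tonelli variation `V[f]` of `f` over the whole `ℝ^N`. -/
noncomputable def tonelliVar (N : ℕ) (f : (Fin N → ℝ) → ℝ) : ℝ≥0∞ :=
  ⨆ (a : Fin N → ℝ) (b : Fin N → ℝ) (_ : a ≤ b), tonelliVarOn N f a b

/-- Classical absolute continuity of `g` on the interval `[a,b]`. -/
def AbsContOn (g : ℝ → ℝ) (a b : ℝ) : Prop :=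
  ∀ ε > (0 : ℝ), ∃ δ > (0 : ℝ), ∀ (n : ℕ) (c d : Fin n → ℝ),
    (∀ i, a ≤ c i ∧ c i ≤ d i ∧ d i ≤ b) →
    (∀ i j, i ≠ j → Disjoint (Set.Ioo (c i) (d i)) (Set.Ioo (c j) (d j))) →
    (∑ i, (d i - c i)) < δ → (∑ i, |g (d i) - g (c i)|) < ε

lemma aux_evar_le (h φ : ℝ → ℝ)
    (hφ : ∀ a b, a ≤ b → h b - h a = ∫ u in a..b, φ u) (a b : ℝ) :
    eVariationOn h (Set.Icc a b) ≤ ∫⁻ u in Set.Icc a b, ‖φ u‖ₑ := by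
  unfold eVariationOn
  refine iSup_le ?_
  rintro ⟨n, u, hu, hus⟩
  have hd := hu.pairwise_disjoint_on_Ioc_succ
  calc ∑ i ∈ Finset.range n, edist (h (u (i+1))) (h (u i))
      ≤ ∑ i ∈ Finset.range n, ∫⁻ x in Set.Ioc (u i) (u (i+1)), ‖φ x‖ₑ := by
        refine Finset.sum_le_sum fun i _ => ?_
        have h1 : u i ≤ u (i+1) := hu (Nat.le_succ i)
        rw [edist_eq_enorm_sub, hφ _ _ h1, intervalIntegral.integral_of_le h1]
        exact enorm_integral_le_lintegral_enorm _
    _ = ∫⁻ x in ⋃ i ∈ Finset.range n, Set.Ioc (u i) (u (i+1)), ‖φ x‖ₑ := by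
        rw [lintegral_biUnion_finset]
        · intro i _ k _ hik
          exact hd hik
        · intro i _
          exact measurableSet_Ioc
    _ ≤ _ := by
        refine lintegral_mono_set ?_
        intro x hx
        simp only [Set.mem_iUnion] at hx
        obtain ⟨i, _, hx⟩ := hx
        exact ⟨(hus i).1.trans hx.1.le, hx.2.trans (hus (i+1)).2⟩

lemma aux_fubini {N : ℕ} (j : Fin N) (F : (Fin N → ℝ) → ℝ≥0∞) (hF : Measurable F) :
    ∫⁻ x' : {i : Fin N // i ≠ j} → ℝ, ∫⁻ s : ℝ, F (sect j x' s) = ∫⁻ x, F x := by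
  have e1 := volume_preserving_piEquivPiSubtypeProd (fun _ : Fin N => ℝ) (fun i => i = j)
  have e2 : MeasurePreserving (MeasurableEquiv.funUnique {i : Fin N // i = j} ℝ) volume volume := by
    convert volume_preserving_funUnique {i : Fin N // i = j} ℝ
  have key : ∀ (p : {i : Fin N // i = j} → ℝ) (x' : {i : Fin N // i ≠ j} → ℝ),
      (MeasurableEquiv.piEquivPiSubtypeProd (fun _ : Fin N => ℝ) (fun i => i = j)).symm (p, x')
      = sect j x' (p ⟨j, rfl⟩) := by
    intro p x'
    funext i
    by_cases h : i = j
    · subst h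
      simp [sect, MeasurableEquiv.piEquivPiSubtypeProd, Equiv.piEquivPiSubtypeProd]
    · simp [sect, MeasurableEquiv.piEquivPiSubtypeProd, Equiv.piEquivPiSubtypeProd, h]
  rw [← (e1.symm).lintegral_comp hF, Measure.volume_eq_prod, lintegral_prod_symm]
  · refine lintegral_congr fun x' => ?_
    have hm : Measurable fun s : ℝ => F (sect j x' s) := by
      refine hF.comp ?_
      refine measurable_pi_lambda _ fun i => ?_
      unfold sect
      by_cases h : i = j
      · simp only [h, dite_true]; exact measurable_id
      · simp only [h, dite_false]; exact measurable_const
    rw [← e2.lintegral_comp hm]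
    simp only [key]
    congr! 1
    congr!
  · exact (hF.comp (MeasurableEquiv.measurable _)).aemeasurable

lemma aux_PhiJ_le {N : ℕ} (h : (Fin N → ℝ) → ℝ) (j : Fin N) (φ : (Fin N → ℝ) → ℝ)
    (hm : Measurable φ)
    (hφ : ∀ x a b, a ≤ b → h (Function.update x j b) - h (Function.update x j a) =
      ∫ u in a..b, φ (Function.update x j u)) (a b : Fin N → ℝ) :
    PhiJ N h a b j ≤ ∫⁻ x in Set.univ.pi (fun i => Set.Icc (a i) (b i)), ‖φ x‖ₑ := by
  have hs : ∀ x' s, sect j x' s = Function.update (sect j x' 0) j s := by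
    intro x' s
    funext i
    by_cases h : i = j
    · subst h; simp [sect]
    · simp [sect, h]
  have hmeas : MeasurableSet (Set.univ.pi (fun i => Set.Icc (a i) (b i))) :=
    MeasurableSet.univ_pi fun i => measurableSet_Icc
  have hmeas' : MeasurableSet {x' : {i : Fin N // i ≠ j} → ℝ | ∀ i, x' i ∈ Set.Icc (a i.1) (b i.1)} := by
    have : {x' : {i : Fin N // i ≠ j} → ℝ | ∀ i, x' i ∈ Set.Icc (a i.1) (b i.1)} =
      Set.univ.pi (fun i : {i : Fin N // i ≠ j} => Set.Icc (a i.1) (b i.1)) := by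
        ext; simp only [Set.mem_ofPred_eq, Set.mem_pi, Set.mem_univ, true_imp_iff]
    rw [this]
    exact MeasurableSet.univ_pi fun i => measurableSet_Icc
  rw [← lintegral_indicator hmeas, ← aux_fubini j _ (hm.enorm.indicator hmeas)]
  unfold PhiJ
  rw [← lintegral_indicator hmeas']
  refine lintegral_mono fun x' => ?_
  by_cases hx : x' ∈ {x' : {i : Fin N // i ≠ j} → ℝ | ∀ i, x' i ∈ Set.Icc (a i.1) (b i.1)}
  · rw [Set.indicator_of_mem hx]
    refine (aux_evar_le _ (fun s => φ (sect j x' s)) ?_ _ _).trans ?_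
    · intro c d hcd
      have h1 := hφ (sect j x' 0) c d hcd
      simp only [← hs x'] at h1
      exact h1
    · rw [← lintegral_indicator measurableSet_Icc]
      refine lintegral_mono fun s => ?_
      by_cases hsI : s ∈ Set.Icc (a j) (b j)
      · rw [Set.indicator_of_mem hsI, Set.indicator_of_mem]
        intro i _
        by_cases h : i = j
        · subst h; simpa [sect] using hsI
        · simpa [sect, h] using hx ⟨i, h⟩
      · rw [Set.indicator_of_notMem hsI]; exact zero_le
  · rw [Set.indicator_of_notMem hx]; exact zero_le

lemma aux_PhiTot_le {N : ℕ} (h : (Fin N → ℝ) → ℝ) (a b : Fin N → ℝ) :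
    PhiTot N h a b ≤ ∑ j, PhiJ N h a b j := by
  unfold PhiTot
  set S := ∑ j, PhiJ N h a b j with hS
  have h1 : ∑ j : Fin N, PhiJ N h a b j ^ 2 ≤ S ^ 2 := by
    calc ∑ j : Fin N, PhiJ N h a b j ^ 2 ≤ ∑ j : Fin N, PhiJ N h a b j * S := by
          refine Finset.sum_le_sum fun j hj => ?_
          rw [sq]
          gcongr
          exact Finset.single_le_sum (f := fun j => PhiJ N h a b j) (fun _ _ => zero_le) hj
      _ = S ^ 2 := by rw [← Finset.sum_mul, sq]
  calc _ ≤ (S ^ 2) ^ (1/2 : ℝ) := ENNReal.rpow_le_rpow h1 (by norm_num)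
    _ = S := by
      rw [← ENNReal.rpow_natCast, ← ENNReal.rpow_mul]; norm_num

lemma aux_tonelli_le {N : ℕ} (h : (Fin N → ℝ) → ℝ) (φ : Fin N → (Fin N → ℝ) → ℝ)
    (hm : ∀ j, Measurable (φ j))
    (hφ : ∀ j x a b, a ≤ b → h (Function.update x j b) - h (Function.update x j a) =
      ∫ u in a..b, φ j (Function.update x j u)) :
    tonelliVar N h ≤ ∑ j, ∫⁻ x, ‖φ j x‖ₑ := by
  unfold tonelliVar tonelliVarOn
  refine iSup_le fun a => iSup_le fun b => iSup_le fun _ => iSup_le fun p => iSup_le fun A =>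
    iSup_le fun B => iSup_le fun hP => ?_
  calc ∑ k, PhiTot N h (A k) (B k)
      ≤ ∑ k, ∑ j, ∫⁻ x in Set.univ.pi (fun i => Set.Ioo (A k i) (B k i)), ‖φ j x‖ₑ := by
        refine Finset.sum_le_sum fun k _ => (aux_PhiTot_le _ _ _).trans ?_
        refine Finset.sum_le_sum fun j _ => (aux_PhiJ_le h j (φ j) (hm j) (hφ j) _ _).trans ?_
        rw [setLIntegral_congr]
        have h1 := Measure.univ_pi_Ioo_ae_eq_Icc (μ := fun _ : Fin N => (volume : Measure ℝ))
          (f := A k) (g := B k)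
        rw [← Set.pi_univ_Icc] at h1
        exact h1.symm
    _ = ∑ j, ∑ k, ∫⁻ x in Set.univ.pi (fun i => Set.Ioo (A k i) (B k i)), ‖φ j x‖ₑ :=
        Finset.sum_comm
    _ ≤ _ := by
        refine Finset.sum_le_sum fun j _ => ?_
        rw [← tsum_fintype (L := .unconditional _), ← lintegral_iUnion]
        · exact setLIntegral_le_lintegral _ _
        · intro k
          exact MeasurableSet.univ_pi fun i => measurableSet_Ioo
        · intro k l hkl
          exact hP.2.2 k l hkl

/-- Kernels that are continuous, supported in `[-L,L]` and form a partition of unity. -/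
def GoodK (L : ℝ) (κ : ℝ → ℝ) : Prop :=
  Continuous κ ∧ (∀ s, L < |s| → κ s = 0) ∧ ∀ u : ℝ, HasSum (fun k : ℤ => κ (u - (k : ℝ))) 1

lemma aux_goodk_bdd {L : ℝ} {κ : ℝ → ℝ} (h : GoodK L κ) : ∃ C : ℝ, ∀ s, |κ s| ≤ C := by
  obtain ⟨C, hC⟩ := (isCompact_Icc (a := -L) (b := L)).exists_bound_of_continuousOn h.1.continuousOn
  refine ⟨max C 0, fun s => ?_⟩
  by_cases hs : L < |s|
  · rw [h.2.1 s hs]; simp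
  · exact (hC s (abs_le.mp (not_lt.mp hs))).trans (le_max_left _ _)

/-- the relevant indices -/
noncomputable def idxF (L u : ℝ) : Finset ℤ := Finset.Icc ⌈u - L⌉ ⌊u + L⌋

lemma aux_mem_idxF (L u : ℝ) (k : ℤ) : k ∈ idxF L u ↔ |u - k| ≤ L := by
  unfold idxF
  rw [Finset.mem_Icc, Int.ceil_le, Int.le_floor, abs_le]
  constructor
  · rintro ⟨h1, h2⟩; constructor <;> linarith
  · rintro ⟨h1, h2⟩; constructor <;> linarith

lemma aux_card_idxF (L u : ℝ) (hL : 0 ≤ L) : ((idxF L u).card : ℝ) ≤ 2 * L + 1 := by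
  unfold idxF
  rw [Int.card_Icc]
  have h1 : (0:ℝ) ≤ 2 * L + 1 := by linarith
  have h2 := Int.floor_le (u + L)
  have h3 := Int.le_ceil (u - L)
  have h4 : (((⌊u + L⌋ + 1 - ⌈u - L⌉).toNat : ℤ) : ℝ) ≤ 2 * L + 1 := by
    rw [Int.toNat_eq_max]
    push_cast
    refine max_le ?_ h1
    linarith
  exact_mod_cast h4

lemma aux_goodk_sum {L : ℝ} {κ : ℝ → ℝ} (h : GoodK L κ) (u : ℝ) :
    ∑ k ∈ idxF L u, κ (u - k) = 1 := by
  refine (hasSum_sum_of_ne_finset_zero ?_).unique (h.2.2 u)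
  intro k hk
  rw [aux_mem_idxF, not_le] at hk
  exact h.2.1 _ hk

lemma aux_goodk_shift {L c : ℝ} {κ : ℝ → ℝ} (h : GoodK L κ) :
    GoodK (L + |c|) (fun s => κ (s + c)) := by
  refine ⟨h.1.comp (by fun_prop), fun s hs => h.2.1 _ ?_, fun u => ?_⟩
  · have := abs_sub_abs_le_abs_sub s (-c)
    rw [abs_neg, sub_neg_eq_add] at this
    linarith
  · have := h.2.2 (u + c)
    convert this using 3
    ring

lemma aux_goodk_mono {L L' : ℝ} {κ : ℝ → ℝ} (h : GoodK L κ) (hL : L ≤ L') : GoodK L' κ :=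
  ⟨h.1, fun s hs => h.2.1 s (hL.trans_lt hs), h.2.2⟩

lemma aux_avg_deriv {χ : ℝ → ℝ} (hc : Continuous χ) (m : ℕ) (t : ℝ) :
    HasDerivAt (avgKernel χ m) ((1 / (m:ℝ)) * (χ (t + m / 2) - χ (t - m / 2))) t := by
  have h1 : avgKernel χ m = fun t => (1 / (m:ℝ)) *
      ((∫ v in (0:ℝ)..(t + m/2), χ v) - ∫ v in (0:ℝ)..(t - m/2), χ v) := by
    funext t
    unfold avgKernel
    rw [intervalIntegral.integral_comp_add_left (fun v => χ v),
      intervalIntegral.integral_interval_sub_left (hc.intervalIntegrable _ _)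
      (hc.intervalIntegrable _ _)]
    congr 2; ring
  rw [h1]
  refine HasDerivAt.const_mul _ (HasDerivAt.sub ?_ ?_)
  · have h2 := intervalIntegral.integral_hasDerivAt_right (hc.intervalIntegrable 0 (t + m/2))
      (hc.stronglyMeasurableAtFilter _ _) hc.continuousAt
    exact h2.comp_add_const t (m/2)
  · have h2 := intervalIntegral.integral_hasDerivAt_right (hc.intervalIntegrable 0 (t - m/2))
      (hc.stronglyMeasurableAtFilter _ _) hc.continuousAt
    exact h2.comp_sub_const t (m/2)

lemma aux_avg_good {χ : ℝ → ℝ} {T : ℝ} (h : GoodK T χ) (m : ℕ) (hm : 1 ≤ m) :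
    GoodK (T + m) (avgKernel χ m) := by
  have hm' : (1:ℝ) ≤ m := by exact_mod_cast hm
  have hsup : ∀ s, T + m < |s| → avgKernel χ m s = 0 := by
    intro s hs
    unfold avgKernel
    rw [intervalIntegral.integral_congr (g := fun _ => (0:ℝ))]
    · simp
    · intro v hv
      rw [Set.uIcc_of_le (by linarith)] at hv
      refine h.2.1 _ ?_
      have h1 : |v| ≤ m / 2 := abs_le.mpr ⟨by linarith [hv.1], hv.2⟩
      have := abs_sub_abs_le_abs_sub s (-v)
      rw [abs_neg, sub_neg_eq_add] at this
      linarith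
  refine ⟨continuous_iff_continuousAt.mpr fun t => (aux_avg_deriv h.1 m t).continuousAt, hsup, ?_⟩
  intro u
  have hs : ∑ k ∈ idxF (T + m) u, avgKernel χ m (u - k) = 1 := by
    unfold avgKernel
    rw [← Finset.mul_sum, ← intervalIntegral.integral_finsetSum]
    · rw [intervalIntegral.integral_congr (g := fun _ => (1:ℝ))]
      · simp only [intervalIntegral.integral_const, smul_eq_mul, mul_one]
        field_simp
        ring
      · intro v hv
        rw [Set.uIcc_of_le (by linarith)] at hv
        have h1 : |v| ≤ m / 2 := abs_le.mpr ⟨by linarith [hv.1], hv.2⟩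
        refine (hasSum_sum_of_ne_finset_zero (L := .unconditional _) (f := fun k : ℤ => χ (u - k + v)) ?_).unique ?_
        · intro k hk
          rw [aux_mem_idxF, not_le] at hk
          refine h.2.1 _ ?_
          have := abs_sub_abs_le_abs_sub (u - k) (-v)
          rw [abs_neg, sub_neg_eq_add] at this
          linarith
        · convert h.2.2 (u + v) using 3
          ring
    · intro k _
      exact (h.1.comp (by fun_prop)).intervalIntegrable _ _
  rw [← hs]
  refine hasSum_sum_of_ne_finset_zero ?_
  intro k hk
  rw [aux_mem_idxF, not_le] at hk
  exact hsup _ hk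

lemma aux_bound {N : ℕ} {L : ℝ} (hL : 0 ≤ L) {κ : Fin N → ℝ → ℝ} (hκ : ∀ i, GoodK L (κ i)) :
    ∃ A : ℝ, 0 ≤ A ∧ ∀ (w : ℝ) (t : Fin N → ℝ) (c : (Fin N → ℤ) → ℝ) (γ ε : ℝ),
      (∀ k : Fin N → ℤ, (∀ i, |w * t i - k i| ≤ L) → |c k - γ| ≤ ε) →
      |(∑' k : Fin N → ℤ, c k * ∏ i, κ i (w * t i - k i)) - γ| ≤ A * ε := by
  choose C hC using fun i => aux_goodk_bdd (hκ i)
  have hC0 : ∀ i, 0 ≤ C i := fun i => (abs_nonneg _).trans (hC i 0)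
  refine ⟨∏ i : Fin N, ((2 * L + 1) * C i), Finset.prod_nonneg fun i _ =>
    mul_nonneg (by linarith) (hC0 i), ?_⟩
  intro w t c γ ε h
  set F := Fintype.piFinset (fun i => idxF L (w * t i)) with hF
  have hmem : ∀ k, k ∈ F ↔ ∀ i, |w * t i - k i| ≤ L := by
    intro k
    simp only [hF, Fintype.mem_piFinset, aux_mem_idxF]
  have hz : ∀ k, k ∉ F → ∏ i, κ i (w * t i - k i) = 0 := by
    intro k hk
    rw [hmem] at hk
    push Not at hk
    obtain ⟨i, hi⟩ := hk
    exact Finset.prod_eq_zero (Finset.mem_univ i) ((hκ i).2.1 _ hi)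
  have h1 : ∑ k ∈ F, ∏ i, κ i (w * t i - k i) = 1 := by
    rw [hF, ← Finset.prod_univ_sum (fun i => idxF L (w * t i)) (fun i (k : ℤ) => κ i (w * t i - k))]
    exact Finset.prod_eq_one fun i _ => aux_goodk_sum (hκ i) _
  rw [tsum_eq_sum (s := F) (fun k hk => by rw [hz k hk, mul_zero])]
  have h2 : (∑ k ∈ F, c k * ∏ i, κ i (w * t i - k i)) - γ =
      ∑ k ∈ F, (c k - γ) * ∏ i, κ i (w * t i - k i) := by
    simp only [sub_mul, Finset.sum_sub_distrib, ← Finset.mul_sum, h1, mul_one]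
  rw [h2]
  have hne : F.Nonempty := by
    by_contra hne
    rw [Finset.not_nonempty_iff_eq_empty] at hne
    rw [hne] at h1
    simp at h1
  have hε : 0 ≤ ε := by
    obtain ⟨k, hk⟩ := hne
    exact (abs_nonneg _).trans (h k ((hmem k).1 hk))
  calc |∑ k ∈ F, (c k - γ) * ∏ i, κ i (w * t i - k i)|
      ≤ ∑ k ∈ F, |(c k - γ) * ∏ i, κ i (w * t i - k i)| := Finset.abs_sum_le_sum_abs _ _
    _ ≤ ∑ k ∈ F, ε * ∏ i, C i := by
        refine Finset.sum_le_sum fun k hk => ?_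
        rw [abs_mul, Finset.abs_prod]
        exact mul_le_mul (h k ((hmem k).1 hk)) (Finset.prod_le_prod (fun _ _ => abs_nonneg _)
          fun i _ => hC i _) (Finset.prod_nonneg fun _ _ => abs_nonneg _) hε
    _ = (∏ i, ((idxF L (w * t i)).card : ℝ)) * (ε * ∏ i, C i) := by
        rw [Finset.sum_const, nsmul_eq_mul, hF, Fintype.card_piFinset]
        push_cast; rfl
    _ ≤ (∏ i : Fin N, (2 * L + 1)) * (ε * ∏ i, C i) := by
        refine mul_le_mul_of_nonneg_right (Finset.prod_le_prod (fun _ _ => by positivity)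
          fun i _ => aux_card_idxF _ _ hL) (mul_nonneg hε (Finset.prod_nonneg fun i _ => hC0 i))
    _ = _ := by rw [Finset.prod_mul_distrib]; ring

lemma aux_fin (N : ℕ) (L w B : ℝ) (hw : 0 ≤ w) : ∃ G : Finset (Fin N → ℤ), ∀ k ∉ G,
    ∀ t : Fin N → ℝ, (∀ i, |t i| ≤ B) → ∃ i, L < |w * t i - k i| := by
  refine ⟨Fintype.piFinset (fun _ => idxF (w * B + L) 0), fun k hk t ht => ?_⟩
  simp only [Fintype.mem_piFinset, aux_mem_idxF, not_forall, not_le] at hk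
  obtain ⟨i, hi⟩ := hk
  refine ⟨i, ?_⟩
  have h1 : |w * t i| ≤ w * B := by
    rw [abs_mul, abs_of_nonneg hw]; exact mul_le_mul_of_nonneg_left (ht i) hw
  have h2 := abs_sub_abs_le_abs_sub (k i : ℝ) (w * t i)
  rw [abs_sub_comm] at h2
  rw [zero_sub, abs_neg] at hi
  linarith

/-- kernel of the differentiated series -/
noncomputable def kerJ {N : ℕ} (χ : Fin N → ℝ → ℝ) (m : ℕ) (j i : Fin N) : ℝ → ℝ :=
  if i = j then fun s => χ j (s + (m : ℝ) / 2) else avgKernel (χ i) m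

noncomputable def prodJ {N : ℕ} (χ : Fin N → ℝ → ℝ) (m : ℕ) (w : ℝ) (j : Fin N)
    (k : Fin N → ℤ) (t : Fin N → ℝ) : ℝ := ∏ i, kerJ χ m j i (w * t i - k i)

/-- differentiated series -/
noncomputable def serJ {N : ℕ} (χ : Fin N → ℝ → ℝ) (m : ℕ) (f : (Fin N → ℝ) → ℝ) (w : ℝ)
    (j : Fin N) (t : Fin N → ℝ) : ℝ :=
  ∑' k : Fin N → ℤ, ((w / m) * (f (fun i => (k i : ℝ) / w) -
    f (fun i => (((k - Pi.single j (m : ℤ) : Fin N → ℤ) i : ℤ) : ℝ) / w))) * ∏ i, kerJ χ m j i (w * t i - k i)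

lemma aux_kerJ_good {N : ℕ} {χ : Fin N → ℝ → ℝ} {T : ℝ} (h : ∀ i, GoodK T (χ i))
    (m : ℕ) (hm : 1 ≤ m) (j i : Fin N) : GoodK (T + m) (kerJ χ m j i) := by
  unfold kerJ
  split_ifs
  · refine aux_goodk_mono (aux_goodk_shift (h j)) ?_
    rw [abs_of_nonneg (by positivity)]
    have : (0:ℝ) ≤ m := by positivity
    linarith
  · exact aux_avg_good (h i) m hm

lemma aux_prod_deriv {N : ℕ} {χ : Fin N → ℝ → ℝ} (hc : ∀ i, Continuous (χ i)) (m : ℕ) (w : ℝ)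
    (j : Fin N) (k : Fin N → ℤ) (x : Fin N → ℝ) (u : ℝ) :
    HasDerivAt (fun u => ∏ i, avgKernel (χ i) m (w * (Function.update x j u) i - k i))
      ((w / m) * (prodJ χ m w j k (Function.update x j u) -
        prodJ χ m w j (k + Pi.single j (m : ℤ)) (Function.update x j u))) u := by
  set R : ℝ := ∏ i ∈ Finset.univ.erase j, avgKernel (χ i) m (w * x i - k i) with hR
  have e1 : ∀ u, ∏ i, avgKernel (χ i) m (w * (Function.update x j u) i - k i) =
      avgKernel (χ j) m (w * u - k j) * R := by
    intro u
    rw [← Finset.mul_prod_erase _ _ (Finset.mem_univ j), Function.update_self, hR]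
    congr 1
    refine Finset.prod_congr rfl fun i hi => ?_
    rw [Function.update_of_ne (Finset.ne_of_mem_erase hi)]
  have e2 : prodJ χ m w j k (Function.update x j u) = χ j (w * u - k j + m / 2) * R := by
    unfold prodJ
    rw [← Finset.mul_prod_erase _ _ (Finset.mem_univ j), Function.update_self, hR]
    congr 1
    · simp [kerJ]
    · refine Finset.prod_congr rfl fun i hi => ?_
      have hi' := Finset.ne_of_mem_erase hi
      rw [Function.update_of_ne hi']
      simp [kerJ, hi']
  have e3 : prodJ χ m w j (k + Pi.single j (m : ℤ)) (Function.update x j u) =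
      χ j (w * u - k j - m / 2) * R := by
    unfold prodJ
    rw [← Finset.mul_prod_erase _ _ (Finset.mem_univ j), Function.update_self, hR]
    congr 1
    · simp only [kerJ, if_true, Pi.add_apply, Pi.single_eq_same]
      congr 1
      push_cast
      ring
    · refine Finset.prod_congr rfl fun i hi => ?_
      have hi' := Finset.ne_of_mem_erase hi
      rw [Function.update_of_ne hi']
      simp [kerJ, hi']
  rw [funext e1, e2, e3]
  have h1 : HasDerivAt (fun u : ℝ => w * u - k j) w u := by
    simpa using ((hasDerivAt_id u).const_mul w).sub_const (k j : ℝ)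
  have h2 := ((aux_avg_deriv (hc j) m (w * u - k j)).comp u h1).mul_const R
  refine HasDerivAt.congr_deriv h2 ?_
  ring

lemma aux_prodJ_zero {N : ℕ} {χ : Fin N → ℝ → ℝ} {T : ℝ} (h : ∀ i, GoodK T (χ i))
    (m : ℕ) (hm : 1 ≤ m) (w : ℝ) (j : Fin N) (k : Fin N → ℤ) (t : Fin N → ℝ)
    (hk : ∃ i, T + m < |w * t i - k i|) : prodJ χ m w j k t = 0 := by
  obtain ⟨i, hi⟩ := hk
  exact Finset.prod_eq_zero (Finset.mem_univ i) ((aux_kerJ_good h m hm j i).2.1 _ hi)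

lemma aux_shift_far {N : ℕ} {L : ℝ} (m : ℕ) (w : ℝ) (j : Fin N) (k : Fin N → ℤ) (t : Fin N → ℝ)
    (hk : ∃ i, L + m < |w * t i - k i|) :
    ∃ i, L < |w * t i - ((k + Pi.single j (m : ℤ) : Fin N → ℤ) i : ℤ)| := by
  obtain ⟨i, hi⟩ := hk
  refine ⟨i, ?_⟩
  have h0 : |((Pi.single j (m : ℤ) : Fin N → ℤ) i : ℝ)| ≤ m := by
    by_cases h : i = j
    · subst h; simp
    · simp [h]
  have h2 := abs_sub_abs_le_abs_sub (w * t i - k i) ((Pi.single j (m : ℤ) : Fin N → ℤ) i : ℝ)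
  rw [Pi.add_apply]
  push_cast
  rw [sub_sub] at h2
  linarith

lemma aux_serJ_alt {N : ℕ} {χ : Fin N → ℝ → ℝ} {T : ℝ} (h : ∀ i, GoodK T (χ i))
    (m : ℕ) (hm : 1 ≤ m) (f : (Fin N → ℝ) → ℝ) (w : ℝ) (hw : 0 ≤ w) (j : Fin N) (t : Fin N → ℝ) :
    serJ χ m f w j t = ∑' k : Fin N → ℤ, f (fun i => (k i : ℝ) / w) *
      ((w / m) * (prodJ χ m w j k t - prodJ χ m w j (k + Pi.single j (m : ℤ)) t)) := by
  obtain ⟨G, hG⟩ := aux_fin N (T + m) w (∑ i, |t i|) hw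
  have ht : ∀ i, |t i| ≤ ∑ i, |t i| := fun i =>
    Finset.single_le_sum (f := fun i => |t i|) (fun _ _ => abs_nonneg _) (Finset.mem_univ i)
  have hz : ∀ k ∉ G, prodJ χ m w j k t = 0 := fun k hk =>
    aux_prodJ_zero h m hm w j k t (hG k hk t ht)
  have s1 : Summable fun k : Fin N → ℤ => (w / m) * f (fun i => (k i : ℝ) / w) * prodJ χ m w j k t :=
    summable_of_ne_finset_zero (s := G) fun k hk => by rw [hz k hk, mul_zero]
  have s2 : Summable fun k : Fin N → ℤ => (w / m) *
      f (fun i => (((k - Pi.single j (m : ℤ) : Fin N → ℤ) i : ℤ) : ℝ) / w) * prodJ χ m w j k t :=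
    summable_of_ne_finset_zero (s := G) fun k hk => by rw [hz k hk, mul_zero]
  have s3 := (Equiv.addRight (Pi.single j (m : ℤ) : Fin N → ℤ)).summable_iff.mpr s2
  have e3 := (Equiv.addRight (Pi.single j (m : ℤ) : Fin N → ℤ)).tsum_eq
    (fun k : Fin N → ℤ => (w / m) *
      f (fun i => (((k - Pi.single j (m : ℤ) : Fin N → ℤ) i : ℤ) : ℝ) / w) * prodJ χ m w j k t)
  simp only [Function.comp_def, Equiv.coe_addRight, add_sub_cancel_right] at s3 e3
  calc serJ χ m f w j t = ∑' k : Fin N → ℤ, ((w / m) * f (fun i => (k i : ℝ) / w) *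
        prodJ χ m w j k t - (w / m) *
      f (fun i => (((k - Pi.single j (m : ℤ) : Fin N → ℤ) i : ℤ) : ℝ) / w) * prodJ χ m w j k t) := by
        unfold serJ
        refine tsum_congr fun k => ?_
        unfold prodJ
        ring
    _ = _ := by
        rw [s1.tsum_sub s2, ← e3, ← s1.tsum_sub s3]
        refine tsum_congr fun k => ?_
        ring

lemma aux_prodJ_cont {N : ℕ} {χ : Fin N → ℝ → ℝ} {T : ℝ} (h : ∀ i, GoodK T (χ i))
    (m : ℕ) (hm : 1 ≤ m) (w : ℝ) (j : Fin N) (k : Fin N → ℤ) :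
    Continuous (prodJ χ m w j k) := by
  unfold prodJ
  refine continuous_finsetProd _ fun i _ => ?_
  exact (aux_kerJ_good h m hm j i).1.comp (by fun_prop)

lemma aux_serJ_meas {N : ℕ} {χ : Fin N → ℝ → ℝ} {T : ℝ} (h : ∀ i, GoodK T (χ i))
    (m : ℕ) (hm : 1 ≤ m) (f : (Fin N → ℝ) → ℝ) (w : ℝ) (hw : 0 ≤ w) (j : Fin N) :
    Measurable (serJ χ m f w j) := by
  choose G hG using fun n : ℕ => aux_fin N (T + m) w n hw
  refine measurable_of_tendsto_metrizable (f := fun n t => ∑ k ∈ G n,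
    ((w / m) * (f (fun i => (k i : ℝ) / w) -
    f (fun i => (((k - Pi.single j (m : ℤ) : Fin N → ℤ) i : ℤ) : ℝ) / w))) * prodJ χ m w j k t) ?_ ?_
  · intro n
    refine Continuous.measurable ?_
    refine continuous_finsetSum _ fun k _ => ?_
    exact continuous_const.mul (aux_prodJ_cont h m hm w j k)
  · rw [tendsto_pi_nhds]
    intro t
    refine tendsto_const_nhds.congr' ?_
    obtain ⟨n0, hn0⟩ := exists_nat_ge (∑ i, |t i|)
    filter_upwards [Filter.eventually_ge_atTop n0] with n hn
    unfold serJ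
    refine tsum_eq_sum fun k hk => ?_
    have : prodJ χ m w j k t = 0 := by
      refine aux_prodJ_zero h m hm w j k t (hG n k hk t fun i => ?_)
      have : (n0 : ℝ) ≤ n := by exact_mod_cast hn
      exact (Finset.single_le_sum (f := fun i => |t i|) (fun _ _ => abs_nonneg _)
        (Finset.mem_univ i)).trans (hn0.trans this)
    unfold prodJ at this
    rw [this, mul_zero]

lemma aux_ser_ftc {N : ℕ} {χ : Fin N → ℝ → ℝ} {T : ℝ} (h : ∀ i, GoodK T (χ i))
    (m : ℕ) (hm : 1 ≤ m) (f : (Fin N → ℝ) → ℝ) (w : ℝ) (hw : 0 ≤ w) (j : Fin N)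
    (x : Fin N → ℝ) (a b : ℝ) (hab : a ≤ b) (S : (Fin N → ℝ) → ℝ)
    (hS : S = fun t => ∑' k : Fin N → ℤ, f (fun i => (k i : ℝ) / w) *
          ∏ i, avgKernel (χ i) m (w * t i - (k i : ℝ))) :
    IntervalIntegrable (fun u => serJ χ m f w j (Function.update x j u)) volume a b ∧
    S (Function.update x j b) - S (Function.update x j a) =
      ∫ u in a..b, serJ χ m f w j (Function.update x j u) := by
  set B : ℝ := ∑ i, |x i| + |a| + |b| with hB
  obtain ⟨G, hG⟩ := aux_fin N (T + m + m) w B hw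
  have hx0 : ∀ i, |x i| ≤ ∑ i, |x i| := fun i =>
    Finset.single_le_sum (f := fun i => |x i|) (fun _ _ => abs_nonneg _) (Finset.mem_univ i)
  have hbd : ∀ u ∈ Set.Icc a b, ∀ i, |Function.update x j u i| ≤ B := by
    intro u hu i
    by_cases hi : i = j
    · subst hi
      rw [Function.update_self]
      have h1 : |u| ≤ |a| + |b| := by
        rw [abs_le]
        constructor
        · linarith [neg_abs_le a, abs_nonneg b, hu.1]
        · linarith [le_abs_self b, abs_nonneg a, hu.2]
      have := (abs_nonneg _).trans (hx0 i)
      linarith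
    · rw [Function.update_of_ne hi]
      linarith [hx0 i, abs_nonneg a, abs_nonneg b]
  have hm0 : (0:ℝ) ≤ m := by positivity
  have hfar : ∀ u ∈ Set.Icc a b, ∀ k ∉ G, ∃ i, T + m < |w * (Function.update x j u) i - k i| := by
    intro u hu k hk
    obtain ⟨i, hi⟩ := hG k hk _ (hbd u hu)
    exact ⟨i, by linarith⟩
  have hSu : ∀ u ∈ Set.Icc a b, S (Function.update x j u) = ∑ k ∈ G, f (fun i => (k i : ℝ) / w) *
          ∏ i, avgKernel (χ i) m (w * (Function.update x j u) i - (k i : ℝ)) := by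
    intro u hu
    rw [hS]
    refine tsum_eq_sum fun k hk => ?_
    obtain ⟨i, hi⟩ := hfar u hu k hk
    rw [Finset.prod_eq_zero (Finset.mem_univ i) ((aux_avg_good (h i) m hm).2.1 _ hi), mul_zero]
  set q : (Fin N → ℤ) → ℝ → ℝ := fun k u => (w / m) * (prodJ χ m w j k (Function.update x j u) -
    prodJ χ m w j (k + Pi.single j (m : ℤ)) (Function.update x j u)) with hq
  have hDu : ∀ u ∈ Set.Icc a b, serJ χ m f w j (Function.update x j u) =
      ∑ k ∈ G, f (fun i => (k i : ℝ) / w) * q k u := by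
    intro u hu
    rw [aux_serJ_alt h m hm f w hw]
    refine tsum_eq_sum fun k hk => ?_
    rw [aux_prodJ_zero h m hm w j k _ (hfar u hu k hk), aux_prodJ_zero h m hm w j _ _
      (aux_shift_far m w j k _ (hG k hk _ (hbd u hu)))]
    simp
  have hqc : ∀ k, Continuous (q k) := by
    intro k
    have hu : Continuous fun u : ℝ => Function.update x j u := continuous_const.update j continuous_id
    exact continuous_const.mul (((aux_prodJ_cont h m hm w j k).comp hu).sub
      ((aux_prodJ_cont h m hm w j _).comp hu))
  have hsc : Continuous fun u => ∑ k ∈ G, f (fun i => (k i : ℝ) / w) * q k u :=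
    continuous_finsetSum _ fun k _ => continuous_const.mul (hqc k)
  constructor
  · refine (hsc.intervalIntegrable a b).congr ?_
    intro u hu
    rw [Set.uIoc_of_le hab] at hu
    exact (hDu u ⟨hu.1.le, hu.2⟩).symm
  · rw [hSu b ⟨hab, le_rfl⟩, hSu a ⟨le_rfl, hab⟩]
    rw [intervalIntegral.integral_congr (g := fun u => ∑ k ∈ G, f (fun i => (k i : ℝ) / w) * q k u)]
    · symm
      refine (intervalIntegral.integral_eq_sub_of_hasDerivAt
        (f := fun u => ∑ k ∈ G, f (fun i => (k i : ℝ) / w) *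
          ∏ i, avgKernel (χ i) m (w * (Function.update x j u) i - (k i : ℝ))) ?_
        (hsc.intervalIntegrable a b))
      intro u _
      refine HasDerivAt.fun_sum fun k _ => ?_
      exact (aux_prod_deriv (fun i => (h i).1) m w j k x u).const_mul _
    · intro u hu
      rw [Set.uIcc_of_le hab] at hu
      exact hDu u hu

lemma aux_bdd_integrable (φ : ℝ → ℝ) (hφ : Measurable φ) (C : ℝ) (hC : ∀ s, |φ s| ≤ C) (a b : ℝ) :
    IntervalIntegrable φ volume a b := by
  have h1 : IntervalIntegrable (fun _ : ℝ => C) volume a b := intervalIntegrable_const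
  refine h1.mono_fun hφ.aestronglyMeasurable ?_
  refine Filter.Eventually.of_forall fun s => ?_
  exact (hC s).trans (le_abs_self C)

lemma aux_coef {N : ℕ} (m : ℕ) (hm : 1 ≤ m) (f : (Fin N → ℝ) → ℝ) (j : Fin N)
    (g : (Fin N → ℝ) → ℝ) (hgm : Measurable g) (Mg : ℝ) (hgb : ∀ s, |g s| ≤ Mg)
    (hftc : ∀ (x : Fin N → ℝ) (a b : ℝ), a < b →
      f (Function.update x j b) - f (Function.update x j a) =
        ∫ u in a..b, g (Function.update x j u))
    (L w : ℝ) (hw : 0 < w) (t : Fin N → ℝ) (γ ε : ℝ)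
    (hg : ∀ y : Fin N → ℝ, (∀ i, |y i - t i| ≤ (L + m) / w) → |g y - γ| ≤ ε)
    (k : Fin N → ℤ) (hk : ∀ i, |w * t i - k i| ≤ L) :
    |(w / m) * (f (fun i => (k i : ℝ) / w) -
      f (fun i => (((k - Pi.single j (m : ℤ) : Fin N → ℤ) i : ℤ) : ℝ) / w)) - γ| ≤ ε := by
  have hm' : (1:ℝ) ≤ m := by exact_mod_cast hm
  set x : Fin N → ℝ := fun i => (k i : ℝ) / w with hx
  set a : ℝ := ((k j : ℝ) - m) / w with ha
  set b : ℝ := (k j : ℝ) / w with hb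
  have hab : a < b := by
    rw [ha, hb]; gcongr; linarith
  have hba : b - a = m / w := by rw [ha, hb]; ring
  have e1 : x = Function.update x j b := by
    rw [hb]; simp [hx]
  have e2 : (fun i => (((k - Pi.single j (m : ℤ) : Fin N → ℤ) i : ℤ) : ℝ) / w) =
      Function.update x j a := by
    funext i
    by_cases hi : i = j
    · subst hi; simp [ha]
    · simp [hi, hx]
  rw [e2]
  nth_rewrite 1 [e1]
  rw [hftc x a b hab]
  have hgi : IntervalIntegrable (fun u => g (Function.update x j u)) volume a b :=
    aux_bdd_integrable _ (hgm.comp (measurable_update x)) Mg (fun s => hgb _) a b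
  have e3 : (w / m) * (∫ u in a..b, g (Function.update x j u)) - γ =
      (w / m) * ∫ u in a..b, (g (Function.update x j u) - γ) := by
    rw [intervalIntegral.integral_sub hgi intervalIntegrable_const,
      intervalIntegral.integral_const, hba, smul_eq_mul]
    field_simp
  have hb2 : ‖∫ u in a..b, (g (Function.update x j u) - γ)‖ ≤ ε * |b - a| := by
    refine intervalIntegral.norm_integral_le_of_norm_le_const fun u hu => ?_
    rw [Set.uIoc_of_le hab.le] at hu
    refine hg _ fun i => ?_
    have hki := abs_le.mp (hk i)
    rw [le_div_iff₀ hw, ← abs_of_pos hw, ← abs_mul]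
    by_cases hi : i = j
    · subst hi
      rw [Function.update_self]
      have h1 : (k i : ℝ) - m < u * w := by
        have := hu.1; rw [ha, div_lt_iff₀ hw] at this; exact this
      have h2 : u * w ≤ k i := by
        have := hu.2; rw [hb, le_div_iff₀ hw] at this; exact this
      rw [abs_le]
      constructor <;> nlinarith [hki.1, hki.2]
    · rw [Function.update_of_ne hi]
      have : (x i - t i) * w = k i - w * t i := by
        simp only [hx]; field_simp
      rw [this, abs_le]
      constructor <;> linarith [hki.1, hki.2]
  rw [e3, abs_mul, abs_of_pos (by positivity : 0 < w / m)]
  rw [Real.norm_eq_abs, hba, abs_of_pos (by positivity : 0 < m / w)] at hb2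
  calc w / m * |∫ u in a..b, (g (Function.update x j u) - γ)| ≤ w / m * (ε * (m / w)) := by gcongr
    _ = ε := by field_simp

lemma aux_floor_lintegral {N : ℕ} (φ : (Fin N → ℤ) → ℝ≥0∞) :
    Measurable (fun t : Fin N → ℝ => φ (fun i => ⌊t i⌋)) ∧
    ∫⁻ t : Fin N → ℝ, φ (fun i => ⌊t i⌋) = ∑' k, φ k := by
  have hfl : Measurable (fun t : Fin N → ℝ => (fun i => ⌊t i⌋ : Fin N → ℤ)) :=
    measurable_pi_lambda _ fun i => (Int.measurable_floor).comp (measurable_pi_apply i)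
  have hφ : Measurable φ := measurable_of_countable φ
  refine ⟨hφ.comp hfl, ?_⟩
  rw [← lintegral_map hφ hfl, lintegral_countable']
  refine tsum_congr fun k => ?_
  rw [Measure.map_apply hfl (measurableSet_singleton k)]
  have : (fun t : Fin N → ℝ => (fun i => ⌊t i⌋ : Fin N → ℤ)) ⁻¹' {k} =
      Set.univ.pi fun i => Set.Ico (k i : ℝ) (k i + 1) := by
    ext t
    simp only [Set.mem_preimage, Set.mem_singleton_iff, funext_iff, Int.floor_eq_iff, Set.mem_pi,
      Set.mem_univ, true_imp_iff, Set.mem_Ico]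
  rw [this, Real.volume_pi_Ico]
  simp

lemma aux_dom {N : ℕ} (g : (Fin N → ℝ) → ℝ) (Mg : ℝ) (hgb : ∀ s, |g s| ≤ Mg)
    (hgΛ : ∀ x : Fin N → ℤ → ℝ, (∀ i, AdmissiblePartition (x i)) →
      Summable (fun k : Fin N → ℤ =>
        sSup {d : ℝ | ∃ y : Fin N → ℝ,
            (∀ i, y i ∈ Set.Ico (x i (k i - 1)) (x i (k i))) ∧ d = |g y|} *
          ∏ i, (x i (k i) - x i (k i - 1)))) (R : ℝ) :
    ∃ H : (Fin N → ℝ) → ℝ, Measurable H ∧ ∫⁻ t, ENNReal.ofReal (H t) ≠ ⊤ ∧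
      ∀ t y : Fin N → ℝ, (∀ i, |y i - t i| ≤ R) → |g y| ≤ H t := by
  set s : (Fin N → ℤ) → ℝ := fun k => sSup {d : ℝ | ∃ y : Fin N → ℝ,
            (∀ i, y i ∈ Set.Ico ((k i : ℝ) - 1) (k i : ℝ)) ∧ d = |g y|} with hs
  have hsum : Summable s := by
    have := hgΛ (fun _ n => (n : ℝ)) (fun i => ⟨⟨1, one_pos, fun n => by push_cast; linarith⟩,
      ⟨1, fun n => by push_cast; linarith⟩⟩)
    simpa [hs] using this
  have hs0 : ∀ k, 0 ≤ s k := by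
    intro k
    refine Real.sSup_nonneg ?_
    rintro d ⟨y, _, rfl⟩
    exact abs_nonneg _
  have hgs : ∀ y : Fin N → ℝ, |g y| ≤ s (fun i => ⌊y i⌋ + 1) := by
    intro y
    refine le_csSup ⟨Mg, ?_⟩ ⟨y, fun i => ?_, rfl⟩
    · rintro d ⟨y, _, rfl⟩
      exact hgb y
    · push_cast
      exact ⟨by linarith [Int.floor_le (y i)], Int.lt_floor_add_one _⟩
  set E : Finset (Fin N → ℤ) := Fintype.piFinset fun _ => idxF (R + 2) 0 with hE
  have hH := fun e : Fin N → ℤ => aux_floor_lintegral (fun k => ENNReal.ofReal (s (k + e)))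
  have hfl : Measurable (fun t : Fin N → ℝ => (fun i => ⌊t i⌋ : Fin N → ℤ)) :=
    measurable_pi_lambda _ fun i => (Int.measurable_floor).comp (measurable_pi_apply i)
  refine ⟨fun t => ∑ e ∈ E, s ((fun i => ⌊t i⌋) + e), ?_, ?_, ?_⟩
  · refine Finset.measurable_fun_sum _ fun e _ => ?_
    exact (measurable_of_countable (fun k => s (k + e))).comp hfl
  · have : ∀ t : Fin N → ℝ, ENNReal.ofReal (∑ e ∈ E, s ((fun i => ⌊t i⌋) + e)) =
        ∑ e ∈ E, ENNReal.ofReal (s ((fun i => ⌊t i⌋) + e)) := fun t =>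
      ENNReal.ofReal_sum_of_nonneg fun e _ => hs0 _
    simp only [this]
    rw [lintegral_finsetSum _ fun e _ => (hH e).1]
    refine (ENNReal.sum_lt_top.mpr fun e _ => ?_).ne
    rw [(hH e).2]
    have := ((Equiv.addRight e).summable_iff.mpr hsum).tsum_ofReal_ne_top
    exact lt_top_iff_ne_top.mpr this
  · intro t y hy
    refine (hgs y).trans ?_
    set e : Fin N → ℤ := fun i => ⌊y i⌋ + 1 - ⌊t i⌋ with he
    have hee : (fun i => ⌊y i⌋ + 1) = (fun i => ⌊t i⌋) + e := by
      funext i; simp [he]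
    rw [hee]
    refine Finset.single_le_sum (f := fun e => s ((fun i => ⌊t i⌋) + e)) (fun e _ => hs0 _) ?_
    rw [hE, Fintype.mem_piFinset]
    intro i
    rw [aux_mem_idxF, zero_sub, abs_neg]
    simp only [he]
    push_cast
    have h1 := abs_le.mp (hy i)
    have h2 := Int.floor_le (y i)
    have h3 := Int.lt_floor_add_one (y i)
    have h4 := Int.floor_le (t i)
    have h5 := Int.lt_floor_add_one (t i)
    rw [abs_le]
    constructor <;> linarith [h1.1, h1.2]

lemma aux_conv {N : ℕ} {χ : Fin N → ℝ → ℝ} {T : ℝ} (hT : 0 < T) (h : ∀ i, GoodK T (χ i))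
    (m : ℕ) (hm : 1 ≤ m) (f : (Fin N → ℝ) → ℝ) (j : Fin N)
    (g : (Fin N → ℝ) → ℝ) (hgm : Measurable g) (Mg : ℝ) (hgb : ∀ s, |g s| ≤ Mg)
    (hgc : ∀ᵐ x : Fin N → ℝ, ContinuousAt g x)
    (hgΛ : ∀ x : Fin N → ℤ → ℝ, (∀ i, AdmissiblePartition (x i)) →
      Summable (fun k : Fin N → ℤ =>
        sSup {d : ℝ | ∃ y : Fin N → ℝ,
            (∀ i, y i ∈ Set.Ico (x i (k i - 1)) (x i (k i))) ∧ d = |g y|} *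
          ∏ i, (x i (k i) - x i (k i - 1))))
    (hftc : ∀ (x : Fin N → ℝ) (a b : ℝ), a < b →
      f (Function.update x j b) - f (Function.update x j a) =
        ∫ u in a..b, g (Function.update x j u)) :
    Filter.Tendsto (fun w : ℝ => ∫⁻ t, ‖serJ χ m f w j t - g t‖ₑ) Filter.atTop (nhds 0) := by
  obtain ⟨A, hA0, hA⟩ := aux_bound (L := T + m) (by positivity) (aux_kerJ_good h m hm j)
  have key : ∀ w : ℝ, 0 < w → ∀ t γ ε,
      (∀ y : Fin N → ℝ, (∀ i, |y i - t i| ≤ (T + m + m) / w) → |g y - γ| ≤ ε) →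
      |serJ χ m f w j t - γ| ≤ A * ε := fun w hw t γ ε hg =>
    hA w t _ γ ε fun k hk => aux_coef m hm f j g hgm Mg hgb hftc (T + m) w hw t γ ε hg k hk
  have hR0 : 0 ≤ T + m + m := by positivity
  obtain ⟨H, hHm, hHi, hH⟩ := aux_dom g Mg hgb hgΛ (T + m + m)
  have hmain := tendsto_lintegral_filter_of_dominated_convergence (μ := volume)
    (l := (Filter.atTop : Filter ℝ))
    (F := fun w t => ‖serJ χ m f w j t - g t‖ₑ) (f := fun _ => 0)
    (fun t => ENNReal.ofReal (A + 1) * ENNReal.ofReal (H t)) ?_ ?_ ?_ ?_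
  · simpa using hmain
  · filter_upwards [Filter.eventually_ge_atTop (0:ℝ)] with w hw
    exact ((aux_serJ_meas h m hm f w hw j).sub hgm).enorm
  · filter_upwards [Filter.eventually_ge_atTop (1:ℝ)] with w hw
    refine Filter.Eventually.of_forall fun t => ?_
    have hw0 : 0 < w := by linarith
    have h1 := key w hw0 t 0 (H t) fun y hy => by
      rw [sub_zero]
      exact hH t y fun i => (hy i).trans (div_le_self hR0 hw)
    have h2 : |g t| ≤ H t := hH t t fun i => by simpa using hR0
    rw [sub_zero] at h1
    rw [← ENNReal.ofReal_mul (by linarith), ← ofReal_norm]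
    refine ENNReal.ofReal_le_ofReal ?_
    have h3 := norm_sub_le (serJ χ m f w j t) (g t)
    simp only [Real.norm_eq_abs] at h3 ⊢
    linarith
  · rw [lintegral_const_mul _ hHm.ennreal_ofReal]
    exact ENNReal.mul_ne_top ENNReal.ofReal_ne_top hHi
  · filter_upwards [hgc] with t ht
    have h0 : Filter.Tendsto (fun w => serJ χ m f w j t - g t) Filter.atTop (nhds 0) := by
      rw [Metric.tendsto_nhds]
      intro ε hε
      obtain ⟨δ, hδ, hd⟩ := Metric.continuousAt_iff.mp ht (ε / (A + 1)) (by positivity)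
      have hlim : Filter.Tendsto (fun w : ℝ => (T + m + m) / w) Filter.atTop (nhds 0) :=
        tendsto_const_nhds.div_atTop Filter.tendsto_id
      filter_upwards [hlim.eventually (gt_mem_nhds hδ), Filter.eventually_gt_atTop (0:ℝ)] with w h1 h2
      have h3 := key w h2 t (g t) (ε / (A + 1)) fun y hy => by
        have : dist y t < δ := (dist_pi_lt_iff hδ).mpr fun i => (hy i).trans_lt h1
        exact (hd this).le
      rw [dist_zero_right, Real.norm_eq_abs]
      refine h3.trans_lt ?_
      rw [mul_div_assoc', div_lt_iff₀ (by positivity)]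
      nlinarith
    have := (continuous_enorm.tendsto (0:ℝ)).comp h0
    simpa [Function.comp_def] using this

/-- convergence in variation: let `χ_1,…,χ_N` be continuous one-dimensional
kernels with compact support in `[−T,T]` and `∑_{k∈ℤ} χ_i(u−k) = 1`, `m ≥ 1`, and let `f` be
absolutely continuous in the sense of Tonelli with partial derivatives admitting representatives
`g_j` which are bounded, measurable, continuous a.e., belong to `Λ¹` and are section-wise
primitives of `f`. Then the multivariate generalized sampling series based on the product
averaged kernel converges to `f` in variation: `lim_{w→∞} V[S̄^m_w f − f] = 0`. -/
theorem sampling_series_convergence_in_variation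
    (N : ℕ) (T : ℝ) (hT : 0 < T) (χ : Fin N → ℝ → ℝ)
    (hc : ∀ i, Continuous (χ i))
    (hsupp : ∀ i, ∀ s : ℝ, s ∉ Set.Icc (-T) T → χ i s = 0)
    (hpart : ∀ i, ∀ u : ℝ, HasSum (fun k : ℤ => χ i (u - (k : ℝ))) 1)
    (m : ℕ) (hm : 1 ≤ m)
    (f : (Fin N → ℝ) → ℝ) (hfm : Measurable f) (M : ℝ) (hfb : ∀ s, |f s| ≤ M)
    (hbv : tonelliVar N f < ⊤)
    (hacloc : ∀ (j : Fin N) (a b : ℝ), a ≤ b →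
      ∀ᵐ x' : {i : Fin N // i ≠ j} → ℝ, AbsContOn (fun s => f (sect j x' s)) a b)
    (g : Fin N → (Fin N → ℝ) → ℝ)
    (hgm : ∀ j, Measurable (g j)) (Mg : Fin N → ℝ) (hgb : ∀ j s, |g j s| ≤ Mg j)
    (hgc : ∀ j, ∀ᵐ x : Fin N → ℝ, ContinuousAt (g j) x)
    (hgΛ : ∀ j, ∀ x : Fin N → ℤ → ℝ, (∀ i, AdmissiblePartition (x i)) →
      Summable (fun k : Fin N → ℤ =>
        sSup {d : ℝ | ∃ y : Fin N → ℝ,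
            (∀ i, y i ∈ Set.Ico (x i (k i - 1)) (x i (k i))) ∧ d = |g j y|} *
          ∏ i, (x i (k i) - x i (k i - 1))))
    (hftc : ∀ (j : Fin N) (x : Fin N → ℝ) (a b : ℝ), a < b →
      f (Function.update x j b) - f (Function.update x j a) =
        ∫ u in a..b, g j (Function.update x j u)) :
    Filter.Tendsto
      (fun w : ℝ => tonelliVar N (fun t =>
        (∑' k : Fin N → ℤ, f (fun i => (k i : ℝ) / w) *
          ∏ i, avgKernel (χ i) m (w * t i - (k i : ℝ))) - f t))
      Filter.atTop (nhds 0) := by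
  have hgood : ∀ i, GoodK T (χ i) := fun i => ⟨hc i, fun s hs => hsupp i s fun hmem =>
    absurd (abs_le.mpr hmem) (not_le.mpr hs), hpart i⟩
  have hlim : Filter.Tendsto (fun w : ℝ => ∑ j, ∫⁻ t, ‖serJ χ m f w j t - g j t‖ₑ)
      Filter.atTop (nhds 0) := by
    have := tendsto_finsetSum (Finset.univ : Finset (Fin N)) fun j _ =>
      aux_conv hT hgood m hm f j (g j) (hgm j) (Mg j) (hgb j) (hgc j) (hgΛ j) (hftc j)
    simpa using this
  refine tendsto_of_tendsto_of_tendsto_of_le_of_le' tendsto_const_nhds hlim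
    (Filter.Eventually.of_forall fun _ => zero_le) ?_
  filter_upwards [Filter.eventually_ge_atTop (0:ℝ)] with w hw
  refine aux_tonelli_le _ (fun j t => serJ χ m f w j t - g j t)
    (fun j => (aux_serJ_meas hgood m hm f w hw j).sub (hgm j)) ?_
  intro j x a b hab
  obtain ⟨h1, h2⟩ := aux_ser_ftc hgood m hm f w hw j x a b hab _ rfl
  have hgi : IntervalIntegrable (fun u => g j (Function.update x j u)) volume a b :=
    aux_bdd_integrable _ ((hgm j).comp (measurable_update x)) (Mg j) (fun s => hgb j _) a b
  rw [intervalIntegral.integral_sub h1 hgi, ← h2]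
  have h3 : f (Function.update x j b) - f (Function.update x j a) =
        ∫ u in a..b, g j (Function.update x j u) := by
    rcases hab.eq_or_lt with rfl | hlt
    · simp
    · exact hftc j x a b hlt
  rw [← h3]
  ring
end
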